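/- There exist universal constants c > 0 and n₀ such that for all n ≥ n₀, r ≥ 1, and k with n·r ≤ k ≤ n²: if a randomized t-round adaptive algorithm making k exact linear measurements per round is such that for every n×n real matrix A it outputs a matrix B of rank at most r satisfying ‖A − B‖ ≤ 2·σ_{r+1}(A) with probability at least 99/100 (over the seed), then t ≥ c·log(n²/k)/log log n. -/

import Mathlib

/-!
The hard input is `G + s • u vᵀ`, where `G` has independent standard Gaussian entries, `u` and `v`
are independent uniformly random sign vectors, and `s = 72 / √n`, so that the spike `s • u vᵀ` has
operator norm `72 √n`. With probability at least one half `‖G‖ ≤ 6 √n`, and then the distance of the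
input to the matrices of rank at most `r` is at most `6 √n`, so a successful output `B` satisfies
`‖s • u vᵀ - B‖ ≤ 18 √n`. Two spikes within `36 √n` of each other have strongly correlated sign
vectors; hence a fixed matrix `B` is within `18 √n` of the spike with probability at most
`2 exp (-n / 8)`.

It remains to show that few rounds reveal too little about the spike. The queries being orthonormal,
the transcript on the input `G + x` has an explicit density with respect to independent standard
Gaussian responses. Consequently an event on which the queries have seen at most energy `B`, that is
`∑ ‖Q x‖² ≤ B`, is likelier than under pure noise by a factor of about `exp B` at most. Under pure
noise the transcript is independent of `u` and `v`, and a fixed orthonormal system of `k`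
measurements captures energy `T` of `u ⊗ v` with probability at most `exp (k / (2 n) - T / (8 n))`.
Comparing exponents, the energy captured grows from round to round by at most the constant factor
`K = 82945 = 16 * 72 ^ 2 + 1`.

As long as `232 K ^ t k ≤ n ^ 2`, the total energy is at most `n / 16` except with small
probability, which is too little to overcome the probability `2 exp (-n / 8)` of guessing the spike.
So every deterministic algorithm fails on average, and averaging over the seed transfers this to
randomized algorithms. Therefore `t` is at least a constant times `log (n ^ 2 / k)`, and
`log log n ≥ 1` for `n ≥ 200`. When `t = 0` and `n ^ 2 / k` is close to `1` the argument says
nothing, but an output that ignores the input cannot be right on two different matrices of rank at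
most one.
-/

open MeasureTheory ProbabilityTheory Matrix
open scoped ENNReal Classical

noncomputable section

/-- Squared Euclidean norm of a finitely-indexed real vector. -/
def sqNorm {ι : Type*} [Fintype ι] (x : ι → ℝ) : ℝ := ∑ i, x i ^ 2

/-- Squared Frobenius norm of a real matrix. -/
def frobSq {m n : Type*} [Fintype m] [Fintype n] (A : Matrix m n ℝ) : ℝ :=
  ∑ i, ∑ j, A i j ^ 2

/-- Spectral (ℓ₂ operator) norm of a real matrix. -/
def specNorm {m n : Type*} [Fintype m] [Fintype n] (A : Matrix m n ℝ) : ℝ :=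
  sSup ((fun x : n → ℝ => Real.sqrt (sqNorm (A.mulVec x))) '' {x | sqNorm x ≤ 1})

/-- `i`-th largest singular value (1-based), characterized via
`σ_i(A) = min {‖A − X‖ : rank X ≤ i − 1}`. -/
def singVal {m n : Type*} [Fintype m] [Fintype n] (A : Matrix m n ℝ) (i : ℕ) : ℝ :=
  sInf {c | ∃ X : Matrix m n ℝ, X.rank ≤ i - 1 ∧ c = specNorm (A - X)}

/-- Flattening of an `n × n` matrix into a vector in `ℝ^{n²}`. -/
def vec (n : ℕ) (A : Matrix (Fin n) (Fin n) ℝ) : Fin (n * n) → ℝ :=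
  fun i => A (finProdFinEquiv.symm i).1 (finProdFinEquiv.symm i).2

/-- `u ⊗ v = vec (u vᵀ) ∈ ℝ^{n²}`. -/
def tensor {n : ℕ} (u v : Fin n → ℝ) : Fin (n * n) → ℝ :=
  vec n (Matrix.of fun i j => u i * v j)

/-- Standard Gaussian measure on `ι → ℝ`. -/
def stdGaussian (ι : Type*) [Fintype ι] : Measure (ι → ℝ) :=
  Measure.pi fun _ => gaussianReal 0 1

/-- Standard Gaussian measure on `n × n` matrices (as `Fin n → Fin n → ℝ`). -/
def stdGaussianMat (n : ℕ) : Measure (Fin n → Fin n → ℝ) :=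
  Measure.pi fun _ => stdGaussian (Fin n)

/-- Query maps of a deterministic `t`-round adaptive algorithm making `k` linear
measurements per round on inputs in `ℝ^N`. -/
def QueryMaps (N k t : ℕ) : Type :=
  (j : Fin t) → (Fin (j : ℕ) → (Fin k → ℝ)) → Matrix (Fin k) (Fin N) ℝ

namespace QueryMaps

variable {N k t : ℕ}

/-- Restriction of a round-`j` history to the first `i` rounds. -/
def prefixHist {j : Fin t} (h : Fin (j : ℕ) → Fin k → ℝ) {i : Fin t}
    (hij : (i : ℕ) < (j : ℕ)) : Fin (i : ℕ) → Fin k → ℝ :=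
  fun l => h ⟨l.1, l.isLt.trans hij⟩

/-- Validity of query maps: measurability, orthonormal rows within each round, and
orthogonality across rounds along consistent histories. -/
def Valid (Q : QueryMaps N k t) : Prop :=
  (∀ (j : Fin t) (i : Fin k) (l : Fin N), Measurable fun h => Q j h i l) ∧
  (∀ (j : Fin t) (h : Fin (j : ℕ) → Fin k → ℝ), Q j h * (Q j h)ᵀ = 1) ∧
  (∀ (j i : Fin t) (hij : (i : ℕ) < (j : ℕ)) (h : Fin (j : ℕ) → Fin k → ℝ),
      Q j h * (Q i (prefixHist h hij))ᵀ = 0)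

/-- Responses of the algorithm under exact linear measurements of `a`. -/
def resp (Q : QueryMaps N k t) (a : Fin N → ℝ) (j : Fin t) : Fin k → ℝ :=
  (Q j fun i => resp Q a ⟨i.1, i.isLt.trans j.isLt⟩).mulVec a
termination_by (j : ℕ)
decreasing_by exact i.isLt

/-- Responses of the algorithm under noisy linear measurements of `a`, with fresh
per-round noise `g`. -/
def nresp (Q : QueryMaps N k t) (a : Fin N → ℝ) (g : Fin t → Fin k → ℝ) (j : Fin t) :
    Fin k → ℝ :=
  ((Q j fun i => nresp Q a g ⟨i.1, i.isLt.trans j.isLt⟩).mulVec a) + g j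
termination_by (j : ℕ)
decreasing_by exact i.isLt

/-- The `tk × N` matrix stacking all the query matrices realized along the run of the
algorithm on input `a` (exact measurements). -/
def runMat (Q : QueryMaps N k t) (a : Fin N → ℝ) : Matrix (Fin t × Fin k) (Fin N) ℝ :=
  Matrix.of fun p l =>
    Q p.1 (fun i => resp Q a ⟨i.1, i.isLt.trans p.1.isLt⟩) p.2 l

end QueryMaps

/-- Kullback–Leibler divergence, valued in `[0, ∞]`, defined with the natural
logarithm. -/
def klDiv {Ω : Type*} [MeasurableSpace Ω] (P Q : Measure Ω) : ℝ≥0∞ :=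
  if P ≪ Q ∧ Integrable (fun x => Real.log ((P.rnDeriv Q x).toReal)) P then
    ENNReal.ofReal (∫ x, Real.log ((P.rnDeriv Q x).toReal) ∂P)
  else ⊤


/-- The rank-`r` plant `Σ_{i=1}^r uᵢ vᵢᵀ` built from the rows of `U` and `V`. -/
def plant {n r : ℕ} (U V : Fin r → Fin n → ℝ) : Matrix (Fin n) (Fin n) ℝ :=
  Matrix.of fun i j => ∑ l, U l i * V l j

/-- Schatten-`p` norm (real `p`), via the singular values. -/
def schattenNorm {n : ℕ} (p : ℝ) (A : Matrix (Fin n) (Fin n) ℝ) : ℝ :=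
  (∑ i ∈ Finset.range n, singVal A (i + 1) ^ p) ^ (1 / p)

/-- Ky-Fan `p` norm: sum of the `p` largest singular values. -/
def kyFanNorm {n : ℕ} (p : ℕ) (A : Matrix (Fin n) (Fin n) ℝ) : ℝ :=
  ∑ i ∈ Finset.range p, singVal A (i + 1)

/-! ### Euclidean and spectral norms -/

section Norms

open scoped Matrix.Norms.L2Operator

variable {ι κ : Type*} [Fintype ι] [Fintype κ]

lemma sqNorm_nonneg (x : ι → ℝ) : 0 ≤ sqNorm x :=
  Finset.sum_nonneg fun _ _ => sq_nonneg _

lemma continuous_sqNorm : Continuous (sqNorm : (ι → ℝ) → ℝ) := by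
  unfold sqNorm; fun_prop

@[fun_prop]
lemma measurable_sqNorm : Measurable (sqNorm : (ι → ℝ) → ℝ) := continuous_sqNorm.measurable

lemma sqNorm_eq_dotProduct_self (x : ι → ℝ) : sqNorm x = x ⬝ᵥ x := by
  simp only [sqNorm, dotProduct, sq]

lemma sqNorm_eq_norm_toLp_sq (x : ι → ℝ) : sqNorm x = ‖WithLp.toLp 2 x‖ ^ 2 :=
  (EuclideanSpace.real_norm_sq_eq _).symm

lemma sqNorm_smul (c : ℝ) (x : ι → ℝ) : sqNorm (c • x) = c ^ 2 * sqNorm x := by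
  simp only [sqNorm, Pi.smul_apply, smul_eq_mul, mul_pow, Finset.mul_sum]

lemma sqNorm_single [DecidableEq ι] (i : ι) : sqNorm (Pi.single i (1 : ℝ)) = 1 := by
  simp [sqNorm, Pi.single_apply]

lemma sqNorm_mulVec (A : Matrix κ ι ℝ) (x : ι → ℝ) :
    sqNorm (A *ᵥ x) = x ⬝ᵥ ((Aᵀ * A) *ᵥ x) := by
  rw [sqNorm_eq_dotProduct_self, ← mulVec_mulVec, dotProduct_mulVec x, vecMul_transpose]

lemma sqNorm_transpose_mulVec_of_mul_transpose_eq_one [DecidableEq κ] {A : Matrix κ ι ℝ}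
    (hA : A * Aᵀ = 1) (y : κ → ℝ) : sqNorm (Aᵀ *ᵥ y) = sqNorm y := by
  rw [sqNorm_mulVec, transpose_transpose, hA, one_mulVec, sqNorm_eq_dotProduct_self]

lemma abs_dotProduct_le (x y : ι → ℝ) : |x ⬝ᵥ y| ≤ √(sqNorm x) * √(sqNorm y) := by
  rw [← Real.sqrt_mul (sqNorm_nonneg x)]
  exact Real.abs_le_sqrt (Finset.sum_mul_sq_le_sq_mul_sq _ _ _)

lemma frobSq_eq_trace (A : Matrix κ ι ℝ) : frobSq A = (A * Aᵀ).trace := by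
  simp only [frobSq, Matrix.trace, Matrix.diag, Matrix.mul_apply, Matrix.transpose_apply, sq]

lemma frobSq_transpose (A : Matrix κ ι ℝ) : frobSq Aᵀ = frobSq A :=
  Finset.sum_comm

lemma frobSq_eq_sum_sqNorm_col [DecidableEq ι] (A : Matrix κ ι ℝ) :
    frobSq A = ∑ i, sqNorm (A *ᵥ Pi.single i 1) := by
  rw [← frobSq_transpose]
  simp only [frobSq, sqNorm, mulVec_single_one, transpose_apply, col_apply]

lemma frobSq_mul_of_mul_transpose_eq_one [DecidableEq ι] (A : Matrix κ ι ℝ) {U : Matrix ι ι ℝ}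
    (hU : U * Uᵀ = 1) : frobSq (A * U) = frobSq A := by
  rw [frobSq_eq_trace, transpose_mul, Matrix.mul_assoc, ← Matrix.mul_assoc U, hU,
    Matrix.one_mul, ← frobSq_eq_trace]

lemma specNorm_eq_l2_opNorm [DecidableEq ι] (A : Matrix κ ι ℝ) : specNorm A = ‖A‖ := by
  have hball (x : ι → ℝ) : sqNorm x ≤ 1 ↔ WithLp.toLp 2 x ∈ Metric.closedBall 0 1 := by
    rw [sqNorm_eq_norm_toLp_sq, sq_le_one_iff₀ (norm_nonneg _), mem_closedBall_zero_iff]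
  have hnorm (x : ι → ℝ) : √(sqNorm (A *ᵥ x)) = ‖toEuclideanLin A (WithLp.toLp 2 x)‖ := by
    rw [sqNorm_eq_norm_toLp_sq, Real.sqrt_sq (norm_nonneg _)]
    rfl
  rw [l2_opNorm_def, ← ContinuousLinearMap.sSup_unitClosedBall_eq_norm, specNorm]
  congr 1
  ext c
  constructor
  · rintro ⟨x, hx, rfl⟩
    exact ⟨WithLp.toLp 2 x, (hball x).1 hx, (hnorm x).symm⟩
  · rintro ⟨x, hx, rfl⟩
    exact ⟨x.ofLp, (hball x.ofLp).2 hx, hnorm x.ofLp⟩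

lemma specNorm_nonneg (A : Matrix κ ι ℝ) : 0 ≤ specNorm A :=
  Real.sSup_nonneg (by rintro _ ⟨x, -, rfl⟩; exact Real.sqrt_nonneg _)

lemma sqNorm_mulVec_le (A : Matrix κ ι ℝ) (x : ι → ℝ) :
    sqNorm (A *ᵥ x) ≤ specNorm A ^ 2 * sqNorm x := by
  rw [sqNorm_eq_norm_toLp_sq, sqNorm_eq_norm_toLp_sq, specNorm_eq_l2_opNorm, ← mul_pow]
  gcongr
  exact l2_opNorm_mulVec A (WithLp.toLp 2 x)

lemma abs_dotProduct_mulVec_le (x : κ → ℝ) (A : Matrix κ ι ℝ) (y : ι → ℝ) :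
    |x ⬝ᵥ (A *ᵥ y)| ≤ specNorm A * (√(sqNorm x) * √(sqNorm y)) := by
  refine (abs_dotProduct_le _ _).trans ?_
  have : √(sqNorm (A *ᵥ y)) ≤ specNorm A * √(sqNorm y) := by
    rw [Real.sqrt_le_left (mul_nonneg (specNorm_nonneg A) (Real.sqrt_nonneg _)), mul_pow,
      Real.sq_sqrt (sqNorm_nonneg y)]
    exact sqNorm_mulVec_le A y
  nlinarith [mul_le_mul_of_nonneg_left this (Real.sqrt_nonneg (sqNorm x))]

lemma specNorm_sq_le_of_sqNorm_mulVec_le {A : Matrix κ ι ℝ} {c : ℝ} (hc : 0 ≤ c)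
    (h : ∀ x, sqNorm (A *ᵥ x) ≤ c * sqNorm x) : specNorm A ^ 2 ≤ c := by
  rw [← Real.le_sqrt (specNorm_nonneg A) hc]
  refine Real.sSup_le ?_ (Real.sqrt_nonneg c)
  rintro _ ⟨x, hx, rfl⟩
  exact Real.sqrt_le_sqrt ((h x).trans (mul_le_of_le_one_right hc hx))

lemma exists_lt_sqNorm_mulVec_of_lt_specNorm {A : Matrix κ ι ℝ} {c : ℝ} (hc : 0 ≤ c)
    (h : c < specNorm A) : ∃ x, sqNorm x ≤ 1 ∧ c ^ 2 < sqNorm (A *ᵥ x) := by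
  by_contra! hle
  refine h.not_ge (Real.sSup_le ?_ hc)
  rintro _ ⟨x, hx, rfl⟩
  exact (Real.sqrt_le_left hc).2 (hle x hx)

lemma specNorm_eq_zero {A : Matrix κ ι ℝ} : specNorm A = 0 ↔ A = 0 := by
  rw [specNorm_eq_l2_opNorm, norm_eq_zero]

lemma specNorm_transpose (A : Matrix κ ι ℝ) : specNorm Aᵀ = specNorm A := by
  rw [specNorm_eq_l2_opNorm, specNorm_eq_l2_opNorm, ← conjTranspose_eq_transpose_of_trivial,
    l2_opNorm_conjTranspose]

lemma specNorm_sub_comm (A B : Matrix κ ι ℝ) : specNorm (A - B) = specNorm (B - A) := by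
  simp only [specNorm_eq_l2_opNorm, norm_sub_rev A B]

lemma specNorm_sub_le (A B : Matrix κ ι ℝ) : specNorm (A - B) ≤ specNorm A + specNorm B := by
  simp only [specNorm_eq_l2_opNorm]
  exact norm_sub_le A B

lemma specNorm_sub_le_specNorm_sub_add_specNorm_sub (A B C : Matrix κ ι ℝ) :
    specNorm (A - C) ≤ specNorm (A - B) + specNorm (B - C) := by
  simp only [specNorm_eq_l2_opNorm]
  exact norm_sub_le_norm_sub_add_norm_sub A B C

lemma continuous_specNorm : Continuous (specNorm : Matrix κ ι ℝ → ℝ) := by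
  simp only [funext (specNorm_eq_l2_opNorm (κ := κ) (ι := ι))]
  exact continuous_norm

lemma measurable_specNorm {S : Type*} [MeasurableSpace S] {A : S → Matrix κ ι ℝ}
    (hA : ∀ i j, Measurable fun s => A s i j) : Measurable fun s => specNorm (A s) := by
  have hcont : Continuous fun a : κ → ι → ℝ => specNorm (Matrix.of a) :=
    continuous_specNorm.comp continuous_id
  exact hcont.measurable.comp
    (measurable_pi_lambda _ fun i => measurable_pi_lambda _ fun j => hA i j)

lemma sqNorm_mulVec_le_of_mul_transpose_eq_one [DecidableEq κ] {A : Matrix κ ι ℝ}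
    (hA : A * Aᵀ = 1) (x : ι → ℝ) : sqNorm (A *ᵥ x) ≤ sqNorm x := by
  refine (sqNorm_mulVec_le A x).trans (mul_le_of_le_one_left (sqNorm_nonneg x) ?_)
  rw [← specNorm_transpose]
  refine specNorm_sq_le_of_sqNorm_mulVec_le zero_le_one fun y => ?_
  rw [sqNorm_transpose_mulVec_of_mul_transpose_eq_one hA, one_mul]

lemma singVal_nonneg (A : Matrix κ ι ℝ) (i : ℕ) : 0 ≤ singVal A i :=
  Real.sInf_nonneg (by rintro _ ⟨X, -, rfl⟩; exact specNorm_nonneg _)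

lemma singVal_succ_le_specNorm_sub (A : Matrix κ ι ℝ) {X : Matrix κ ι ℝ} {r : ℕ}
    (hX : X.rank ≤ r) : singVal A (r + 1) ≤ specNorm (A - X) :=
  csInf_le ⟨0, by rintro _ ⟨Y, -, rfl⟩; exact specNorm_nonneg _⟩ ⟨X, hX, rfl⟩

/-- `G + X` is at distance `specNorm G` from the low-rank matrix `X`. -/
lemma specNorm_sub_le_of_specNorm_add_sub_le {G X B : Matrix κ ι ℝ} {r : ℕ} (hX : X.rank ≤ r)
    {C : ℝ} (hC : 0 ≤ C) (hB : specNorm (G + X - B) ≤ C * singVal (G + X) (r + 1)) :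
    specNorm (X - B) ≤ (C + 1) * specNorm G := by
  have hsing : singVal (G + X) (r + 1) ≤ specNorm G := by
    simpa only [add_sub_cancel_right] using singVal_succ_le_specNorm_sub (G + X) hX
  calc specNorm (X - B) = specNorm (G + X - B - G) := by congr 1; abel
    _ ≤ specNorm (G + X - B) + specNorm G := specNorm_sub_le _ _
    _ ≤ C * specNorm G + specNorm G := by gcongr; exact hB.trans (by gcongr)
    _ = (C + 1) * specNorm G := by ring

lemma eq_of_specNorm_sub_le_mul_singVal {A B : Matrix κ ι ℝ} {r : ℕ} (hA : A.rank ≤ r) {C : ℝ}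
    (hB : specNorm (A - B) ≤ C * singVal A (r + 1)) : A = B := by
  have hsing : singVal A (r + 1) = 0 := by
    refine le_antisymm ?_ (singVal_nonneg A _)
    simpa [specNorm_eq_zero.2] using singVal_succ_le_specNorm_sub A hA
  rw [hsing, mul_zero] at hB
  exact sub_eq_zero.1 (specNorm_eq_zero.1 (hB.antisymm (specNorm_nonneg _)))

end Norms

/-! ### Exponential moments of Gaussian and random sign vectors -/

/-- The exponential as an extended nonnegative real, the value of the moment generating functions
below, which are all written as lower Lebesgue integrals. -/
def eexp (x : ℝ) : ℝ≥0∞ := ENNReal.ofReal (Real.exp x)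

@[fun_prop]
lemma measurable_eexp : Measurable eexp := by
  unfold eexp; fun_prop

lemma eexp_add (x y : ℝ) : eexp (x + y) = eexp x * eexp y := by
  rw [eexp, Real.exp_add, ENNReal.ofReal_mul (Real.exp_pos x).le, eexp, eexp]

lemma eexp_sum {ι : Type*} (s : Finset ι) (f : ι → ℝ) :
    eexp (∑ i ∈ s, f i) = ∏ i ∈ s, eexp (f i) := by
  rw [eexp, Real.exp_sum, ENNReal.ofReal_prod_of_nonneg fun _ _ => (Real.exp_pos _).le]
  rfl

lemma eexp_zero : eexp 0 = 1 := by
  simp [eexp]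

@[gcongr]
lemma eexp_le_eexp {x y : ℝ} (h : x ≤ y) : eexp x ≤ eexp y :=
  ENNReal.ofReal_le_ofReal (Real.exp_le_exp.2 h)

lemma one_le_eexp {x : ℝ} (h : 0 ≤ x) : 1 ≤ eexp x :=
  eexp_zero ▸ eexp_le_eexp h

lemma two_mul_eexp_le {x y z : ℝ} (h : 2 * x ≤ y + z) : 2 * eexp x ≤ eexp y + eexp z := by
  have hamgm : 2 * Real.exp x ≤ Real.exp y + Real.exp z := by
    refine (mul_le_mul_of_nonneg_left (Real.exp_le_exp.2 (by linarith : x ≤ y / 2 + z / 2))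
      zero_le_two).trans ?_
    have := two_mul_le_add_sq (Real.exp (y / 2)) (Real.exp (z / 2))
    rwa [mul_assoc, ← Real.exp_add, ← Real.exp_nat_mul, ← Real.exp_nat_mul, Nat.cast_ofNat,
      mul_div_cancel₀ y two_ne_zero, mul_div_cancel₀ z two_ne_zero] at this
  rw [eexp, eexp, eexp, ← ENNReal.ofReal_add (Real.exp_pos y).le (Real.exp_pos z).le,
    ← ENNReal.ofReal_ofNat 2, ← ENNReal.ofReal_mul zero_le_two]
  exact ENNReal.ofReal_le_ofReal hamgm

lemma eexp_ne_top (x : ℝ) : eexp x ≠ ∞ := ENNReal.ofReal_ne_top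

lemma eexp_ne_zero (x : ℝ) : eexp x ≠ 0 := by
  simpa [eexp] using Real.exp_pos x

lemma eexp_neg_natCast_le (m : ℕ) : eexp (-m) ≤ 2⁻¹ ^ m := by
  have hexp : Real.exp (-1) ≤ 2⁻¹ := by
    rw [Real.exp_neg]
    exact inv_anti₀ two_pos (by linarith [Real.add_one_le_exp 1])
  calc eexp (-m) = ENNReal.ofReal (Real.exp (-1)) ^ m := by
        rw [eexp, ← ENNReal.ofReal_pow (Real.exp_pos _).le, ← Real.exp_nat_mul, mul_neg_one]
    _ ≤ ENNReal.ofReal 2⁻¹ ^ m := by gcongr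
    _ = 2⁻¹ ^ m := by rw [ENNReal.ofReal_inv_of_pos two_pos, ENNReal.ofReal_ofNat]

lemma meas_ge_le_eexp_neg_mul_lintegral {α : Type*} [MeasurableSpace α] (μ : Measure α)
    {f : α → ℝ} (hf : Measurable f) (T : ℝ) :
    μ {x | T ≤ f x} ≤ eexp (-T) * ∫⁻ x, eexp (f x) ∂μ := by
  calc μ {x | T ≤ f x} ≤ μ {x | 1 ≤ eexp (-T) * eexp (f x)} := by
        refine measure_mono fun x (hx : T ≤ f x) => ?_
        rw [Set.mem_ofPred_eq, ← eexp_add]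
        exact one_le_eexp (by linarith)
    _ ≤ ∫⁻ x, eexp (-T) * eexp (f x) ∂μ := by
        simpa using mul_meas_ge_le_lintegral (μ := μ) (f := fun x => eexp (-T) * eexp (f x))
          (by fun_prop) 1
    _ = eexp (-T) * ∫⁻ x, eexp (f x) ∂μ := lintegral_const_mul _ (by fun_prop)

section ProductMeasures

variable {ι : Type*} [Fintype ι] {α : ι → Type*} [∀ i, MeasurableSpace (α i)]

lemma lintegral_pi_prod_eq_prod_lintegral (μ : ∀ i, Measure (α i))
    [∀ i, IsProbabilityMeasure (μ i)] {f : ∀ i, α i → ℝ≥0∞} (hf : ∀ i, Measurable (f i)) :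
    ∫⁻ x, ∏ i, f i (x i) ∂(Measure.pi μ) = ∏ i, ∫⁻ a, f i a ∂(μ i) := by
  rw [lintegral_prod_eq_prod_lintegral_of_indepFun Finset.univ _
    (iIndepFun_pi fun i => (hf i).aemeasurable) fun i => (hf i).comp (measurable_pi_apply i)]
  exact Finset.prod_congr rfl fun i _ => (measurePreserving_eval μ i).lintegral_comp (hf i)

lemma pi_withDensity (μ : ∀ i, Measure (α i)) [∀ i, IsProbabilityMeasure (μ i)]
    {f : ∀ i, α i → ℝ≥0∞} (hf : ∀ i, Measurable (f i))
    [∀ i, SigmaFinite ((μ i).withDensity (f i))] :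
    Measure.pi (fun i => (μ i).withDensity (f i))
      = (Measure.pi μ).withDensity fun x => ∏ i, f i (x i) := by
  refine Measure.pi_eq fun s hs => ?_
  have hprod (x : ∀ i, α i) : (Set.univ.pi s).indicator (fun x => ∏ i, f i (x i)) x
      = ∏ i, (s i).indicator (f i) (x i) := by
    by_cases hx : x ∈ Set.univ.pi s
    · simp only [Set.indicator_of_mem hx, Set.indicator_of_mem (hx _ (Set.mem_univ _))]
    · obtain ⟨i, hi⟩ : ∃ i, x i ∉ s i := by simpa using hx
      rw [Set.indicator_of_notMem hx,
        Finset.prod_eq_zero (Finset.mem_univ i) (Set.indicator_of_notMem hi _)]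
  rw [withDensity_apply _ (MeasurableSet.univ_pi hs),
    ← lintegral_indicator (MeasurableSet.univ_pi hs)]
  simp_rw [hprod]
  rw [lintegral_pi_prod_eq_prod_lintegral μ fun i => (hf i).indicator (hs i)]
  simp only [lintegral_indicator (hs _), withDensity_apply _ (hs _)]

end ProductMeasures

lemma lintegral_eexp_dotProduct_pi {ι : Type*} [Fintype ι] (μ : ι → Measure ℝ)
    [∀ i, IsProbabilityMeasure (μ i)] (y : ι → ℝ) :
    ∫⁻ x, eexp (y ⬝ᵥ x) ∂(Measure.pi μ) = ∏ i, ∫⁻ a, eexp (y i * a) ∂(μ i) := by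
  simp only [dotProduct, eexp_sum]
  exact lintegral_pi_prod_eq_prod_lintegral μ (f := fun i a => eexp (y i * a))
    fun i => by fun_prop

/-- The standard Gaussian measure on vectors indexed by a finite type. -/
local notation "𝒩" => (_root_.stdGaussian)

section Gaussian

variable {ι κ : Type*} [Fintype ι] [Fintype κ]

instance isProbabilityMeasure_stdGaussian : IsProbabilityMeasure (𝒩 ι) := by
  unfold _root_.stdGaussian; infer_instance

lemma lintegral_eexp_mul_gaussianReal (a : ℝ) :
    ∫⁻ x, eexp (a * x) ∂(gaussianReal 0 1) = eexp (a ^ 2 / 2) := by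
  have hmgf := congrFun (mgf_fun_id_gaussianReal (μ := 0) (v := 1)) a
  simp only [mgf, zero_mul, NNReal.coe_one, one_mul, zero_add] at hmgf
  simp only [eexp]
  rw [← ofReal_integral_eq_lintegral_ofReal (integrable_exp_mul_gaussianReal a)
    (Filter.Eventually.of_forall fun _ => (Real.exp_pos _).le), hmgf]

lemma lintegral_eexp_dotProduct_stdGaussian (y : ι → ℝ) :
    ∫⁻ g, eexp (y ⬝ᵥ g) ∂(𝒩 ι) = eexp (sqNorm y / 2) := by
  rw [_root_.stdGaussian, lintegral_eexp_dotProduct_pi]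
  simp only [lintegral_eexp_mul_gaussianReal, sqNorm, Finset.sum_div, eexp_sum]

lemma lintegral_add_stdGaussian (m : ι → ℝ) {f : (ι → ℝ) → ℝ≥0∞} (hf : Measurable f) :
    ∫⁻ g, f (g + m) ∂(𝒩 ι) = ∫⁻ g, eexp (m ⬝ᵥ g - sqNorm m / 2) * f g ∂(𝒩 ι) := by
  have hreal (c : ℝ) : (gaussianReal 0 1).withDensity (fun x => eexp (c * x - c ^ 2 / 2))
      = gaussianReal c 1 := by
    rw [gaussianReal_of_var_ne_zero _ one_ne_zero, gaussianReal_of_var_ne_zero _ one_ne_zero,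
      ← withDensity_mul _ (measurable_gaussianPDF 0 1) (by fun_prop)]
    congr 1
    ext x
    simp only [Pi.mul_apply, gaussianPDF, gaussianPDFReal, eexp]
    rw [← ENNReal.ofReal_mul (by positivity), mul_assoc, ← Real.exp_add]
    congr 3
    simp only [NNReal.coe_one, mul_one]
    ring
  have hshift : (𝒩 ι).map (fun g => g + m) = Measure.pi fun i => gaussianReal (m i) 1 := by
    have := Measure.pi_map_pi (μ := fun _ : ι => gaussianReal 0 1) (f := fun i x => x + m i)
      fun i => by fun_prop
    simp only [gaussianReal_map_add_const, zero_add] at this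
    exact this
  have hdensity (g : ι → ℝ) : ∏ i, eexp (m i * g i - m i ^ 2 / 2)
      = eexp (m ⬝ᵥ g - sqNorm m / 2) := by
    rw [← eexp_sum, Finset.sum_sub_distrib, dotProduct, sqNorm, Finset.sum_div]
  have (c : ℝ) : SigmaFinite
      ((gaussianReal 0 1).withDensity fun x => eexp (c * x - c ^ 2 / 2)) := by
    rw [hreal]; infer_instance
  rw [← lintegral_map (f := f) (g := fun g => g + m) hf (by fun_prop), hshift]
  simp only [fun i => (hreal (m i)).symm]
  rw [pi_withDensity _ fun i => by fun_prop, lintegral_withDensity_eq_lintegral_mul _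
    (by fun_prop) hf]
  simp only [Pi.mul_apply, hdensity, _root_.stdGaussian]

lemma charFun_map_toLp_stdGaussian (y : EuclideanSpace ℝ ι) :
    charFun ((𝒩 ι).map (WithLp.toLp 2)) y = Complex.exp (-‖y‖ ^ 2 / 2) := by
  rw [_root_.stdGaussian, map_pi_eq_stdGaussian, charFun_stdGaussian]

/-- Rotation invariance, in a form that also covers sums of independent Gaussian vectors: the
rows of `M` being orthonormal, `M g` is again standard Gaussian. -/
lemma map_mulVec_stdGaussian [DecidableEq ι] {M : Matrix ι κ ℝ} (hM : M * Mᵀ = 1) :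
    (𝒩 κ).map (M *ᵥ ·) = 𝒩 ι := by
  have hmeas : Measurable (M *ᵥ ·) :=
    (Continuous.matrix_mulVec continuous_const continuous_id).measurable
  refine (MeasurableEquiv.toLp 2 (ι → ℝ)).map_measurableEquiv_injective
    (Measure.ext_of_charFun (E := EuclideanSpace ℝ ι) (funext fun y => ?_))
  have hadj (g : κ → ℝ) : inner ℝ (WithLp.toLp 2 (M *ᵥ g)) y
      = inner ℝ (WithLp.toLp 2 g) (WithLp.toLp 2 (Mᵀ *ᵥ y.ofLp)) := by
    simp only [EuclideanSpace.inner_eq_star_dotProduct, star_trivial]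
    rw [dotProduct_mulVec, mulVec_transpose]
  calc charFun (((𝒩 κ).map (M *ᵥ ·)).map (MeasurableEquiv.toLp 2 (ι → ℝ))) y
      = charFun ((𝒩 κ).map (WithLp.toLp 2)) (WithLp.toLp 2 (Mᵀ *ᵥ y.ofLp)) := by
        simp only [charFun_apply, MeasurableEquiv.coe_toLp]
        rw [Measure.map_map (by fun_prop) hmeas, integral_map (by fun_prop) (by fun_prop),
          integral_map (by fun_prop) (by fun_prop)]
        simp only [Function.comp_apply, hadj]
    _ = charFun ((𝒩 ι).map (WithLp.toLp 2)) y := by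
        rw [charFun_map_toLp_stdGaussian, charFun_map_toLp_stdGaussian,
          ← Complex.ofReal_pow, ← sqNorm_eq_norm_toLp_sq,
          sqNorm_transpose_mulVec_of_mul_transpose_eq_one hM, sqNorm_eq_norm_toLp_sq,
          Complex.ofReal_pow, WithLp.toLp_ofLp]

end Gaussian

section QuadraticForms

variable {ι κ : Type*} [Fintype ι] [Fintype κ]

lemma lintegral_eexp_mul_sq_gaussianReal_le {a : ℝ} (h₀ : 0 ≤ a) (h₁ : a ≤ 1 / 4) :
    ∫⁻ x, eexp (a * x ^ 2) ∂(gaussianReal 0 1) ≤ eexp (2 * a) := by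
  have hpos : 0 < 1 - 2 * a := by linarith
  have hdensity (x : ℝ) : gaussianPDF 0 1 x * eexp (a * x ^ 2)
      = ENNReal.ofReal ((√(2 * Real.pi))⁻¹ * Real.exp (-(1 / 2 - a) * x ^ 2)) := by
    simp only [gaussianPDF, gaussianPDFReal, eexp]
    rw [← ENNReal.ofReal_mul (by positivity), mul_assoc, ← Real.exp_add]
    congr 3
    · simp only [NNReal.coe_one, mul_one]
    · simp only [NNReal.coe_one, mul_one]
      ring
  have hint : Integrable (fun x : ℝ => Real.exp (-(1 / 2 - a) * x ^ 2)) :=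
    integrable_exp_neg_mul_sq (by linarith)
  have hvalue : (√(2 * Real.pi))⁻¹ * √(Real.pi / (1 / 2 - a)) = √((1 - 2 * a)⁻¹) := by
    rw [← Real.sqrt_inv, ← Real.sqrt_mul (by positivity)]
    congr 1
    have := Real.pi_pos
    have : 1 - a * 2 ≠ 0 := by linarith
    field_simp
  have hexp : (1 - 2 * a)⁻¹ ≤ Real.exp (2 * a) ^ 2 := by
    rw [← Real.exp_nat_mul, inv_le_iff_one_le_mul₀ hpos]
    push_cast
    nlinarith [Real.add_one_le_exp (2 * (2 * a))]
  rw [gaussianReal_of_var_ne_zero _ one_ne_zero,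
    lintegral_withDensity_eq_lintegral_mul _ (measurable_gaussianPDF 0 1) (by fun_prop)]
  simp only [Pi.mul_apply, hdensity]
  rw [← ofReal_integral_eq_lintegral_ofReal (hint.const_mul _)
    (Filter.Eventually.of_forall fun _ => by positivity), integral_const_mul, integral_gaussian,
    hvalue]
  exact ENNReal.ofReal_le_ofReal (Real.sqrt_le_iff.2 ⟨(Real.exp_pos _).le, hexp⟩)

lemma exists_orthogonal_sqNorm_mulVec_eq (V : Matrix κ ι ℝ) :
    ∃ (U : Matrix ι ι ℝ) (d : ι → ℝ), U * Uᵀ = 1 ∧ Uᵀ * U = 1 ∧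
      ∀ g, sqNorm (V *ᵥ (U *ᵥ g)) = ∑ i, d i * g i ^ 2 := by
  have hS : (Vᵀ * V).IsHermitian := by
    simpa only [conjTranspose_eq_transpose_of_trivial] using isHermitian_conjTranspose_mul_self V
  let U : Matrix ι ι ℝ := hS.eigenvectorUnitary
  have hUU : U * Uᵀ = 1 := by
    simpa only [Unitary.coe_star, Matrix.star_eq_conjTranspose,
      conjTranspose_eq_transpose_of_trivial]
      using Unitary.coe_mul_star_self hS.eigenvectorUnitary
  have hdiag : Uᵀ * (Vᵀ * V) * U = diagonal hS.eigenvalues := by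
    have := hS.conjStarAlgAut_star_eigenvectorUnitary
    rw [Unitary.conjStarAlgAut_star_apply] at this
    simpa [Matrix.star_eq_conjTranspose, conjTranspose_eq_transpose_of_trivial] using this
  refine ⟨U, hS.eigenvalues, hUU, mul_eq_one_comm.1 hUU, fun g => ?_⟩
  have hassoc : Uᵀ * Vᵀ * (V * U) = Uᵀ * (Vᵀ * V) * U := by simp only [Matrix.mul_assoc]
  rw [mulVec_mulVec, sqNorm_mulVec, transpose_mul, hassoc, hdiag]
  simp only [dotProduct, mulVec_diagonal]
  exact Finset.sum_congr rfl fun i _ => by ring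

lemma lintegral_eexp_sqNorm_mulVec_stdGaussian_le (V : Matrix κ ι ℝ) {l : ℝ} (hl : 0 ≤ l)
    (hlV : l * specNorm V ^ 2 ≤ 1 / 4) :
    ∫⁻ g, eexp (l * sqNorm (V *ᵥ g)) ∂(𝒩 ι) ≤ eexp (2 * l * frobSq V) := by
  obtain ⟨U, d, hUU, hUU', hd⟩ := exists_orthogonal_sqNorm_mulVec_eq V
  have hd_eq (i : ι) : d i = sqNorm (V *ᵥ (U *ᵥ Pi.single i 1)) := by
    rw [hd]
    simp [Pi.single_apply]
  have hd_nonneg (i : ι) : 0 ≤ d i := hd_eq i ▸ sqNorm_nonneg _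
  have hd_le (i : ι) : d i ≤ specNorm V ^ 2 := by
    have hcol : sqNorm (U *ᵥ Pi.single i 1) = 1 := by
      rw [sqNorm_mulVec, hUU', one_mulVec, ← sqNorm_eq_dotProduct_self, sqNorm_single]
    simpa only [hd_eq, hcol, mul_one] using sqNorm_mulVec_le V (U *ᵥ Pi.single i 1)
  have hd_sum : ∑ i, d i = frobSq V := by
    rw [← frobSq_mul_of_mul_transpose_eq_one V hUU, frobSq_eq_sum_sqNorm_col]
    simp only [hd_eq, mulVec_mulVec]
  calc ∫⁻ g, eexp (l * sqNorm (V *ᵥ g)) ∂(𝒩 ι)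
      = ∫⁻ g, ∏ i, eexp (l * d i * g i ^ 2) ∂(𝒩 ι) := by
        rw [← map_mulVec_stdGaussian hUU, lintegral_map (by fun_prop) (by fun_prop)]
        simp only [hd, Finset.mul_sum, eexp_sum, mul_assoc]
        rw [map_mulVec_stdGaussian hUU]
    _ = ∏ i, ∫⁻ x, eexp (l * d i * x ^ 2) ∂(gaussianReal 0 1) :=
        lintegral_pi_prod_eq_prod_lintegral _ (f := fun i x => eexp (l * d i * x ^ 2))
          fun i => by fun_prop
    _ ≤ ∏ i, eexp (2 * (l * d i)) :=
        Finset.prod_le_prod' fun i _ => lintegral_eexp_mul_sq_gaussianReal_le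
          (mul_nonneg hl (hd_nonneg i)) ((mul_le_mul_of_nonneg_left (hd_le i) hl).trans hlV)
    _ = eexp (2 * l * frobSq V) := by
        rw [← eexp_sum, ← hd_sum, Finset.mul_sum]
        simp only [mul_assoc]

/-- Sub-Gaussian random vectors: the moment generating function is at most that of the standard
Gaussian vector. -/
def IsSubGaussianVec (σ : Measure (ι → ℝ)) : Prop :=
  ∀ y : ι → ℝ, ∫⁻ x, eexp (y ⬝ᵥ x) ∂σ ≤ eexp (sqNorm y / 2)

lemma isSubGaussianVec_pi {μ : ι → Measure ℝ} [∀ i, IsProbabilityMeasure (μ i)]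
    (h : ∀ i a, ∫⁻ x, eexp (a * x) ∂(μ i) ≤ eexp (a ^ 2 / 2)) :
    IsSubGaussianVec (Measure.pi μ) := fun y => by
  rw [lintegral_eexp_dotProduct_pi, sqNorm, Finset.sum_div, eexp_sum]
  exact Finset.prod_le_prod' fun i _ => h i (y i)

namespace IsSubGaussianVec

variable {σ : Measure (ι → ℝ)}

/-- Writing `eexp (l * ‖V x‖²)` as a Gaussian average of exponentials of linear forms in `x`
reduces the bound to the Gaussian case. -/
lemma lintegral_eexp_sqNorm_mulVec_le [SFinite σ] (hσ : IsSubGaussianVec σ) (V : Matrix κ ι ℝ)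
    {l : ℝ} (hl : 0 ≤ l) (hlV : l * specNorm V ^ 2 ≤ 1 / 4) :
    ∫⁻ x, eexp (l * sqNorm (V *ᵥ x)) ∂σ ≤ eexp (2 * l * frobSq V) := by
  have hsq : √(2 * l) ^ 2 = 2 * l := Real.sq_sqrt (by linarith)
  calc ∫⁻ x, eexp (l * sqNorm (V *ᵥ x)) ∂σ
      = ∫⁻ x, ∫⁻ g, eexp ((√(2 * l) • (V *ᵥ x)) ⬝ᵥ g) ∂(𝒩 κ) ∂σ := by
        refine lintegral_congr fun x => ?_
        rw [lintegral_eexp_dotProduct_stdGaussian, sqNorm_smul, hsq, mul_assoc,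
          mul_div_cancel_left₀ _ two_ne_zero]
    _ = ∫⁻ g, ∫⁻ x, eexp ((√(2 * l) • (Vᵀ *ᵥ g)) ⬝ᵥ x) ∂σ ∂(𝒩 κ) := by
        rw [lintegral_lintegral_swap (by unfold dotProduct; fun_prop)]
        refine lintegral_congr fun g => lintegral_congr fun x => ?_
        rw [smul_dotProduct, smul_dotProduct, mulVec_transpose, ← dotProduct_mulVec,
          dotProduct_comm]
    _ ≤ ∫⁻ g, eexp (l * sqNorm (Vᵀ *ᵥ g)) ∂(𝒩 κ) := by
        refine lintegral_mono fun g => (hσ _).trans (eexp_le_eexp (le_of_eq ?_))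
        rw [sqNorm_smul, hsq]
        ring
    _ ≤ eexp (2 * l * frobSq V) := by
        rw [← frobSq_transpose]
        exact lintegral_eexp_sqNorm_mulVec_stdGaussian_le Vᵀ hl (by rwa [specNorm_transpose])

lemma measure_le_abs_dotProduct_le (hσ : IsSubGaussianVec σ) (y : ι → ℝ) {T : ℝ} (hT : 0 ≤ T) :
    σ {x | T ≤ |y ⬝ᵥ x|} ≤ 2 * eexp (-(T ^ 2 / (2 * sqNorm y))) := by
  have hone (z : ι → ℝ) (hz : sqNorm z = sqNorm y) :
      σ {x | T ≤ z ⬝ᵥ x} ≤ eexp (-(T ^ 2 / (2 * sqNorm y))) := by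
    let c := T / sqNorm y
    have hc : 0 ≤ c := div_nonneg hT (sqNorm_nonneg y)
    calc σ {x | T ≤ z ⬝ᵥ x} ≤ σ {x | c * T ≤ (c • z) ⬝ᵥ x} := by
          refine measure_mono fun x (hx : T ≤ z ⬝ᵥ x) => ?_
          rw [Set.mem_ofPred_eq, smul_dotProduct]
          exact mul_le_mul_of_nonneg_left hx hc
      _ ≤ eexp (-(c * T)) * eexp (sqNorm (c • z) / 2) :=
          (meas_ge_le_eexp_neg_mul_lintegral σ (by unfold dotProduct; fun_prop) _).trans
            (mul_le_mul_right (hσ _) _)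
      _ = eexp (-(T ^ 2 / (2 * sqNorm y))) := by
          rw [← eexp_add, sqNorm_smul, hz]
          congr 1
          rcases eq_or_ne (sqNorm y) 0 with h | h
          · simp [c, h]
          · simp only [c]
            field_simp
            ring
  calc σ {x | T ≤ |y ⬝ᵥ x|} ≤ σ ({x | T ≤ y ⬝ᵥ x} ∪ {x | T ≤ -y ⬝ᵥ x}) :=
        measure_mono fun x hx => by simpa [le_abs, neg_dotProduct] using hx
    _ ≤ _ := (measure_union_le _ _).trans
        (add_le_add (hone y rfl) (hone (-y) (by simp [sqNorm])))
    _ = 2 * eexp (-(T ^ 2 / (2 * sqNorm y))) := (two_mul _).symm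

end IsSubGaussianVec

end QuadraticForms

section RandomSigns

/-- The uniform distribution on `{1, -1}`. -/
def rademacher : Measure ℝ := (2⁻¹ : ℝ≥0∞) • (Measure.dirac 1 + Measure.dirac (-1))

instance isProbabilityMeasure_rademacher : IsProbabilityMeasure rademacher :=
  ⟨by simp [rademacher, ENNReal.inv_two_add_inv_two]⟩

lemma lintegral_eexp_mul_rademacher_le (a : ℝ) :
    ∫⁻ x, eexp (a * x) ∂rademacher ≤ eexp (a ^ 2 / 2) := by
  calc ∫⁻ x, eexp (a * x) ∂rademacher = ENNReal.ofReal (Real.cosh a) := by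
        rw [rademacher, lintegral_smul_measure, lintegral_add_measure, lintegral_dirac,
          lintegral_dirac, eexp, eexp, ← ENNReal.ofReal_add (Real.exp_pos _).le
          (Real.exp_pos _).le, smul_eq_mul, Real.cosh_eq, div_eq_inv_mul,
          ENNReal.ofReal_mul (by norm_num), ENNReal.ofReal_inv_of_pos two_pos]
        simp
    _ ≤ eexp (a ^ 2 / 2) := ENNReal.ofReal_le_ofReal (Real.cosh_le_exp_half_sq a)

/-- The law of a vector of independent uniform random signs. -/
def randomSigns (ι : Type*) [Fintype ι] : Measure (ι → ℝ) := Measure.pi fun _ => rademacher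

variable {ι : Type*} [Fintype ι]

instance isProbabilityMeasure_randomSigns : IsProbabilityMeasure (randomSigns ι) := by
  unfold randomSigns; infer_instance

lemma isSubGaussianVec_randomSigns : IsSubGaussianVec (randomSigns ι) :=
  isSubGaussianVec_pi fun _ => lintegral_eexp_mul_rademacher_le

lemma ae_sqNorm_randomSigns : ∀ᵐ x ∂(randomSigns ι), sqNorm x = Fintype.card ι := by
  have hcoord (i : ι) : ∀ᵐ x ∂(randomSigns ι), x i ^ 2 = 1 := by
    refine (Measure.quasiMeasurePreserving_eval (fun _ : ι => rademacher) i).ae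
      (p := fun a : ℝ => a ^ 2 = 1) ?_
    refine Measure.ae_smul_measure (ae_add_measure_iff.2 ⟨?_, ?_⟩) _ <;>
      rw [ae_dirac_iff (measurableSet_eq_fun (by fun_prop) (by fun_prop))] <;> norm_num
  filter_upwards [ae_all_iff.2 hcoord] with x hx
  simp [sqNorm, hx]

end RandomSigns

section Tensor

variable {n : ℕ} {κ : Type*}

lemma dotProduct_tensor (q : Fin (n * n) → ℝ) (u v : Fin n → ℝ) :
    q ⬝ᵥ tensor u v = ∑ i, ∑ j, q (finProdFinEquiv (i, j)) * (u i * v j) := by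
  rw [← Fintype.sum_prod_type', dotProduct, ← Equiv.sum_comp finProdFinEquiv]
  simp [tensor, _root_.vec]

lemma sqNorm_tensor (u v : Fin n → ℝ) : sqNorm (tensor u v) = sqNorm u * sqNorm v := by
  rw [sqNorm, ← Equiv.sum_comp finProdFinEquiv, Fintype.sum_prod_type]
  simp [tensor, _root_.vec, sqNorm, mul_pow, Finset.sum_mul_sum]

lemma continuous_tensor : Continuous fun p : (Fin n → ℝ) × (Fin n → ℝ) => tensor p.1 p.2 := by
  unfold tensor _root_.vec
  simp only [of_apply]
  fun_prop

/-- The matrix of the linear map `u ↦ Q (u ⊗ v)`. -/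
def tensorSlice (Q : Matrix κ (Fin (n * n)) ℝ) (v : Fin n → ℝ) : Matrix κ (Fin n) ℝ :=
  Matrix.of fun q i => ∑ j, Q q (finProdFinEquiv (i, j)) * v j

/-- The matrix of the linear map taking `v` to all entries of `tensorSlice Q v`. -/
def unfolding (Q : Matrix κ (Fin (n * n)) ℝ) : Matrix (κ × Fin n) (Fin n) ℝ :=
  Matrix.of fun p j => Q p.1 (finProdFinEquiv (p.2, j))

lemma mulVec_tensor (Q : Matrix κ (Fin (n * n)) ℝ) (u v : Fin n → ℝ) :
    Q *ᵥ tensor u v = tensorSlice Q v *ᵥ u := by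
  ext q
  rw [mulVec, dotProduct_tensor]
  simp only [mulVec, dotProduct, tensorSlice, of_apply, Finset.sum_mul]
  exact Finset.sum_congr rfl fun i _ => Finset.sum_congr rfl fun j _ => by ring

variable [Fintype κ]

lemma frobSq_tensorSlice (Q : Matrix κ (Fin (n * n)) ℝ) (v : Fin n → ℝ) :
    frobSq (tensorSlice Q v) = sqNorm (unfolding Q *ᵥ v) := by
  rw [sqNorm, Fintype.sum_prod_type]
  rfl

lemma frobSq_unfolding (Q : Matrix κ (Fin (n * n)) ℝ) : frobSq (unfolding Q) = frobSq Q := by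
  rw [frobSq, frobSq, Fintype.sum_prod_type]
  refine Finset.sum_congr rfl fun q _ => ?_
  rw [← Fintype.sum_prod_type', ← Equiv.sum_comp finProdFinEquiv]
  rfl

variable [DecidableEq κ] {Q : Matrix κ (Fin (n * n)) ℝ}

lemma sqNorm_tensorSlice_mulVec_le (hQ : Q * Qᵀ = 1) (u v : Fin n → ℝ) :
    sqNorm (tensorSlice Q v *ᵥ u) ≤ sqNorm v * sqNorm u := by
  rw [← mulVec_tensor, mul_comm (sqNorm v), ← sqNorm_tensor]
  exact sqNorm_mulVec_le_of_mul_transpose_eq_one hQ _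

lemma specNorm_unfolding_sq_le (hQ : Q * Qᵀ = 1) : specNorm (unfolding Q) ^ 2 ≤ n := by
  refine specNorm_sq_le_of_sqNorm_mulVec_le n.cast_nonneg fun v => ?_
  rw [← frobSq_tensorSlice, frobSq_eq_sum_sqNorm_col]
  calc ∑ i, sqNorm (tensorSlice Q v *ᵥ Pi.single i 1) ≤ ∑ _i : Fin n, sqNorm v :=
        Finset.sum_le_sum fun i _ => by
          simpa only [sqNorm_single, mul_one] using
            sqNorm_tensorSlice_mulVec_le hQ (Pi.single i 1) v
    _ = n * sqNorm v := by simp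

lemma lintegral_eexp_sqNorm_mulVec_tensor_le (hn : 0 < n) (hQ : Q * Qᵀ = 1)
    {σ τ : Measure (Fin n → ℝ)} [SFinite σ] [SFinite τ] (hσ : IsSubGaussianVec σ)
    (hτ : IsSubGaussianVec τ) (hτn : ∀ᵐ v ∂τ, sqNorm v ≤ n) :
    ∫⁻ v, ∫⁻ u, eexp (1 / (8 * n) * sqNorm (Q *ᵥ tensor u v)) ∂σ ∂τ
      ≤ eexp (Fintype.card κ / (2 * n)) := by
  have hn' : (0 : ℝ) < n := Nat.cast_pos.2 hn
  calc ∫⁻ v, ∫⁻ u, eexp (1 / (8 * n) * sqNorm (Q *ᵥ tensor u v)) ∂σ ∂τ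
      ≤ ∫⁻ v, eexp (1 / (4 * n) * sqNorm (unfolding Q *ᵥ v)) ∂τ := by
        refine lintegral_mono_ae (hτn.mono fun v hv => ?_)
        simp only [mulVec_tensor, ← frobSq_tensorSlice]
        refine (hσ.lintegral_eexp_sqNorm_mulVec_le _ (by positivity) ?_).trans
          (eexp_le_eexp (le_of_eq (by field_simp; ring)))
        have := specNorm_sq_le_of_sqNorm_mulVec_le (sqNorm_nonneg v) fun u =>
          sqNorm_tensorSlice_mulVec_le hQ u v
        rw [one_div, inv_mul_le_iff₀ (by positivity)]
        linarith
    _ ≤ eexp (2 * (1 / (4 * n)) * frobSq (unfolding Q)) := by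
        refine hτ.lintegral_eexp_sqNorm_mulVec_le _ (by positivity) ?_
        rw [one_div, inv_mul_le_iff₀ (by positivity)]
        linarith [specNorm_unfolding_sq_le hQ]
    _ = eexp (Fintype.card κ / (2 * n)) := by
        rw [frobSq_unfolding, frobSq_eq_trace, hQ, trace_one]
        congr 1
        field_simp
        norm_num

lemma prod_measure_le_sqNorm_mulVec_tensor_le (hn : 0 < n) (hQ : Q * Qᵀ = 1)
    {σ τ : Measure (Fin n → ℝ)} [SFinite σ] [SFinite τ] (hσ : IsSubGaussianVec σ)
    (hτ : IsSubGaussianVec τ) (hτn : ∀ᵐ v ∂τ, sqNorm v ≤ n) (T : ℝ) :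
    (σ.prod τ) {p | T ≤ sqNorm (Q *ᵥ tensor p.1 p.2)}
      ≤ eexp (Fintype.card κ / (2 * n) - T / (8 * n)) := by
  have : (0 : ℝ) < n := Nat.cast_pos.2 hn
  have hmeas : Measurable fun p : (Fin n → ℝ) × (Fin n → ℝ) =>
      1 / (8 * n) * sqNorm (Q *ᵥ tensor p.1 p.2) :=
    (measurable_sqNorm.comp
      (Continuous.matrix_mulVec continuous_const continuous_tensor).measurable).const_mul _
  calc (σ.prod τ) {p | T ≤ sqNorm (Q *ᵥ tensor p.1 p.2)}
      ≤ (σ.prod τ) {p | T / (8 * n) ≤ 1 / (8 * n) * sqNorm (Q *ᵥ tensor p.1 p.2)} := by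
        refine measure_mono fun p (hp : T ≤ _) => ?_
        rw [Set.mem_ofPred_eq, div_eq_inv_mul, one_div]
        gcongr
    _ ≤ eexp (-(T / (8 * n))) * eexp (Fintype.card κ / (2 * n)) := by
        refine (meas_ge_le_eexp_neg_mul_lintegral _ hmeas _).trans (mul_le_mul_right ?_ _)
        refine (lintegral_prod_symm _ (measurable_eexp.comp hmeas).aemeasurable).trans_le ?_
        exact lintegral_eexp_sqNorm_mulVec_tensor_le hn hQ hσ hτ hτn
    _ = eexp (Fintype.card κ / (2 * n) - T / (8 * n)) := by
        rw [← eexp_add]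
        congr 1
        ring

end Tensor

section Resampling

variable {ι κ : Type*} [Fintype ι] [Fintype κ] [DecidableEq ι] [DecidableEq κ]

/-- The component of a standard Gaussian vector in the row space of `U` may be resampled
independently of the component orthogonal to it. -/
lemma measurePreserving_resample_stdGaussian {U : Matrix κ ι ℝ} (hU : U * Uᵀ = 1) :
    MeasurePreserving (fun p : (κ → ℝ) × (ι → ℝ) => Uᵀ *ᵥ p.1 + (1 - Uᵀ * U) *ᵥ p.2)
      ((𝒩 κ).prod (𝒩 ι)) (𝒩 ι) := by
  set M : Matrix ι (κ ⊕ ι) ℝ := fromCols Uᵀ (1 - Uᵀ * U)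
  have hM : M * Mᵀ = 1 := by
    have hproj : Uᵀ * U * (Uᵀ * U) = Uᵀ * U := by
      rw [Matrix.mul_assoc, ← Matrix.mul_assoc U, hU, Matrix.one_mul]
    rw [transpose_fromCols, fromCols_mul_fromRows]
    simp only [transpose_transpose, transpose_sub, transpose_one, transpose_mul, Matrix.sub_mul,
      Matrix.mul_sub, Matrix.one_mul, Matrix.mul_one, hproj]
    abel
  have hrotate : MeasurePreserving (M *ᵥ ·) (𝒩 (κ ⊕ ι)) (𝒩 ι) :=
    ⟨(Continuous.matrix_mulVec continuous_const continuous_id).measurable,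
      map_mulVec_stdGaussian hM⟩
  have hsplit : (fun p : (κ → ℝ) × (ι → ℝ) => Uᵀ *ᵥ p.1 + (1 - Uᵀ * U) *ᵥ p.2)
      = (M *ᵥ ·) ∘ (MeasurableEquiv.sumPiEquivProdPi fun _ : κ ⊕ ι => ℝ).symm :=
    funext fun p => (fromCols_mulVec_sumElim _ _ p.1 p.2).symm
  rw [hsplit]
  exact hrotate.comp (measurePreserving_sumPiEquivProdPi_symm fun _ => gaussianReal 0 1)

end Resampling

/-! ### Transcripts of adaptive algorithms -/

namespace QueryMaps

variable {N k t : ℕ}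

/-- The query matrix of round `j` along the full transcript `h`. -/
def queryAt (Q : QueryMaps N k t) (h : Fin t → Fin k → ℝ) (j : Fin t) :
    Matrix (Fin k) (Fin N) ℝ :=
  Q j (Fin.take j j.isLt.le h)

lemma resp_eq_queryAt_mulVec (Q : QueryMaps N k t) (a : Fin N → ℝ) (j : Fin t) :
    Q.resp a j = Q.queryAt (Q.resp a) j *ᵥ a := by
  rw [resp]; rfl

lemma eq_resp {Q : QueryMaps N k t} {a : Fin N → ℝ} {h : Fin t → Fin k → ℝ}
    (hh : ∀ j, h j = Q.queryAt h j *ᵥ a) : h = Q.resp a := by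
  funext j
  induction j using WellFoundedLT.induction with
  | ind j ih =>
    rw [hh, resp_eq_queryAt_mulVec]
    exact congrArg (Q j · *ᵥ a) (funext fun i => ih (i.castLE j.isLt.le) i.isLt)

lemma resp_congr {Q : QueryMaps N k t} {a b : Fin N → ℝ}
    (hab : ∀ j h, Q j h *ᵥ a = Q j h *ᵥ b) : Q.resp a = Q.resp b :=
  eq_resp fun j => (resp_eq_queryAt_mulVec Q a j).trans (hab _ _)

lemma measurable_resp {Ω : Type*} [MeasurableSpace Ω] {Q : Ω → QueryMaps N k t}
    (hQ : ∀ (j : Fin t) (i : Fin k) (l : Fin N),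
      Measurable fun p : Ω × (Fin (j : ℕ) → Fin k → ℝ) => Q p.1 j p.2 i l) :
    Measurable fun p : Ω × (Fin N → ℝ) => (Q p.1).resp p.2 := by
  refine measurable_pi_iff.2 fun j => ?_
  induction j using WellFoundedLT.induction with
  | ind j ih =>
    have hhist : Measurable fun p : Ω × (Fin N → ℝ) =>
        (p.1, Fin.take j j.isLt.le ((Q p.1).resp p.2)) :=
      measurable_fst.prodMk (measurable_pi_iff.2 fun i => ih (i.castLE j.isLt.le) i.isLt)
    refine measurable_pi_iff.2 fun i => ?_
    simp only [resp_eq_queryAt_mulVec, mulVec, dotProduct]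
    exact Finset.measurable_sum _ fun l _ =>
      ((hQ j i l).comp hhist).mul ((measurable_pi_apply l).comp measurable_snd)

namespace Valid

variable {Q : QueryMaps N k t} (hQ : Q.Valid)
include hQ

lemma measurable_resp : Measurable Q.resp :=
  (QueryMaps.measurable_resp (Q := fun _ : Unit => Q) fun j i l =>
    (hQ.1 j i l).comp measurable_snd).comp (measurable_const (a := ()).prodMk measurable_id)

lemma measurable_mulVec {S : Type*} [MeasurableSpace S] (j : Fin t)
    {h : S → Fin (j : ℕ) → Fin k → ℝ} {x : S → Fin N → ℝ} (hh : Measurable h)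
    (hx : Measurable x) : Measurable fun s => Q j (h s) *ᵥ x s :=
  measurable_pi_iff.2 fun i => by
    simp only [mulVec, dotProduct]
    exact Finset.measurable_sum _ fun l _ =>
      ((hQ.1 j i l).comp hh).mul ((measurable_pi_apply l).comp hx)

lemma measurable_queryAt_mulVec {S : Type*} [MeasurableSpace S] (j : Fin t)
    {h : S → Fin t → Fin k → ℝ} {x : S → Fin N → ℝ} (hh : Measurable h) (hx : Measurable x) :
    Measurable fun s => Q.queryAt (h s) j *ᵥ x s :=
  hQ.measurable_mulVec j (measurable_pi_iff.2 fun _ => (measurable_pi_apply _).comp hh) hx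

end Valid

/-- The first query matrix, which depends on no response. -/
def head (Q : QueryMaps N k (t + 1)) : Matrix (Fin k) (Fin N) ℝ :=
  Q 0 Fin.elim0

/-- The algorithm that remains after the first round was answered by `r`. -/
def tail (Q : QueryMaps N k (t + 1)) (r : Fin k → ℝ) : QueryMaps N k t :=
  fun j h => Q j.succ (vecCons r h)

lemma queryAt_zero (Q : QueryMaps N k (t + 1)) (h : Fin (t + 1) → Fin k → ℝ) :
    Q.queryAt h 0 = Q.head :=
  congrArg (Q 0) (funext fun i => i.elim0)

lemma queryAt_vecCons_succ (Q : QueryMaps N k (t + 1)) (r : Fin k → ℝ) (h : Fin t → Fin k → ℝ)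
    (j : Fin t) : Q.queryAt (vecCons r h) j.succ = (Q.tail r).queryAt h j :=
  congrArg (Q j.succ) (funext (Fin.cases rfl fun _ => rfl))

lemma resp_eq_vecCons (Q : QueryMaps N k (t + 1)) (a : Fin N → ℝ) :
    Q.resp a = vecCons (Q.head *ᵥ a) ((Q.tail (Q.head *ᵥ a)).resp a) := by
  refine (eq_resp (Fin.cases ?_ fun j => ?_)).symm
  · rw [queryAt_zero, cons_val_zero]
  · rw [queryAt_vecCons_succ, cons_val_succ, resp_eq_queryAt_mulVec]

namespace Valid

variable {Q : QueryMaps N k (t + 1)} (hQ : Q.Valid)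
include hQ

lemma head_mul_transpose : Q.head * Q.headᵀ = 1 :=
  hQ.2.1 0 _

lemma tail (r : Fin k → ℝ) : (Q.tail r).Valid := by
  refine ⟨fun j i l => ?_, fun j h => hQ.2.1 _ _, fun j i hij h => ?_⟩
  · exact (hQ.1 j.succ i l).comp (measurable_pi_iff.2
      (Fin.cases measurable_const fun i => measurable_pi_apply i))
  · have hprefix : Q.tail r i (prefixHist h hij)
        = Q i.succ (prefixHist (j := j.succ) (vecCons r h) (Nat.succ_lt_succ hij)) :=
      congrArg (Q i.succ) (funext (Fin.cases rfl fun _ => rfl))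
    rw [hprefix]
    exact hQ.2.2 j.succ i.succ _ _

lemma tail_mul_head_transpose (r : Fin k → ℝ) (j : Fin t) (h : Fin (j : ℕ) → Fin k → ℝ) :
    Q.tail r j h * Q.headᵀ = 0 := by
  have hprefix : Q.head
      = Q 0 (prefixHist (j := j.succ) (vecCons r h) j.val.succ_pos) :=
    congrArg (Q 0) (funext fun i => i.elim0)
  rw [hprefix]
  exact hQ.2.2 j.succ 0 _ _

end Valid

/-- The algorithm without its last round. -/
def init (Q : QueryMaps N k (t + 1)) : QueryMaps N k t :=
  fun j => Q j.castSucc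

lemma init_resp (Q : QueryMaps N k (t + 1)) (a : Fin N → ℝ) :
    Fin.init (Q.resp a) = Q.init.resp a :=
  eq_resp fun j => resp_eq_queryAt_mulVec Q a j.castSucc

lemma Valid.init {Q : QueryMaps N k (t + 1)} (hQ : Q.Valid) : Q.init.Valid :=
  ⟨fun j => hQ.1 j.castSucc, fun j => hQ.2.1 j.castSucc,
    fun j i => hQ.2.2 j.castSucc i.castSucc⟩

/-- The energy `∑ ‖Q⁽ʲ⁾ x‖²` of the signal `x` seen by the queries along the transcript `h`. -/
def energy (Q : QueryMaps N k t) (x : Fin N → ℝ) (h : Fin t → Fin k → ℝ) : ℝ :=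
  ∑ j, sqNorm (Q.queryAt h j *ᵥ x)

lemma energy_succ (Q : QueryMaps N k (t + 1)) (x : Fin N → ℝ) (h : Fin (t + 1) → Fin k → ℝ) :
    Q.energy x h = Q.init.energy x (Fin.init h) + sqNorm (Q (Fin.last t) (Fin.init h) *ᵥ x) :=
  Fin.sum_univ_castSucc _

lemma Valid.measurable_energy {Q : QueryMaps N k t} (hQ : Q.Valid) {S : Type*}
    [MeasurableSpace S] {x : S → Fin N → ℝ} {h : S → Fin t → Fin k → ℝ} (hx : Measurable x)
    (hh : Measurable h) : Measurable fun s => Q.energy (x s) (h s) :=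
  Finset.measurable_sum _ fun j _ =>
    measurable_sqNorm.comp (hQ.measurable_queryAt_mulVec j hh hx)

end QueryMaps

/-! ### Change of measure for transcripts -/

lemma measurable_vecCons {α : Type*} [MeasurableSpace α] {m : ℕ} :
    Measurable fun p : α × (Fin m → α) => vecCons p.1 p.2 :=
  measurable_pi_iff.2 (Fin.cases measurable_fst fun i =>
    (measurable_pi_apply i).comp measurable_snd)

namespace QueryMaps

variable {N k t : ℕ}

/-- The law of the transcript when every response is an independent standard Gaussian vector. -/
def noiseTranscript (k t : ℕ) : Measure (Fin t → Fin k → ℝ) := Measure.pi fun _ => 𝒩 (Fin k)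

instance isProbabilityMeasure_noiseTranscript :
    IsProbabilityMeasure (noiseTranscript k t) := by
  unfold noiseTranscript; infer_instance

lemma lintegral_noiseTranscript_succ {f : (Fin (t + 1) → Fin k → ℝ) → ℝ≥0∞} (hf : Measurable f) :
    ∫⁻ h, f h ∂(noiseTranscript k (t + 1))
      = ∫⁻ r, ∫⁻ h, f (vecCons r h) ∂(noiseTranscript k t) ∂(𝒩 (Fin k)) := by
  have hcons := (measurePreserving_piFinSuccAbove (fun _ : Fin (t + 1) => 𝒩 (Fin k)) 0).symm
  rw [noiseTranscript, ← hcons.lintegral_comp hf]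
  exact (lintegral_prod _ (hf.comp hcons.measurable).aemeasurable).trans
    (by simp only [Function.comp_apply, MeasurableEquiv.piFinSuccAbove_symm_apply,
      Fin.insertNthEquiv_zero]; rfl)

/-- The log-likelihood ratio, at the transcript `h`, of the input `G + x` against the input `G`,
where `G` is standard Gaussian. -/
def logLik (Q : QueryMaps N k t) (x : Fin N → ℝ) (h : Fin t → Fin k → ℝ) : ℝ :=
  ∑ j, ((Q.queryAt h j *ᵥ x) ⬝ᵥ h j - sqNorm (Q.queryAt h j *ᵥ x) / 2)

lemma logLik_vecCons (Q : QueryMaps N k (t + 1)) (x : Fin N → ℝ) (r : Fin k → ℝ)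
    (h : Fin t → Fin k → ℝ) :
    Q.logLik x (vecCons r h)
      = ((Q.head *ᵥ x) ⬝ᵥ r - sqNorm (Q.head *ᵥ x) / 2) + (Q.tail r).logLik x h := by
  simp only [logLik, Fin.sum_univ_succ, queryAt_zero, queryAt_vecCons_succ, cons_val_zero,
    cons_val_succ]

lemma logLik_two_smul (Q : QueryMaps N k t) (x : Fin N → ℝ) (h : Fin t → Fin k → ℝ) :
    Q.logLik ((2 : ℝ) • x) h = 2 * Q.logLik x h - Q.energy x h := by
  rw [logLik, logLik, energy, Finset.mul_sum, ← Finset.sum_sub_distrib]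
  refine Finset.sum_congr rfl fun j _ => ?_
  rw [mulVec_smul, sqNorm_smul, smul_dotProduct, smul_eq_mul]
  ring

lemma Valid.measurable_eexp_logLik {Q : QueryMaps N k t} (hQ : Q.Valid) (x : Fin N → ℝ) :
    Measurable fun h => eexp (Q.logLik x h) := by
  have hq (j : Fin t) : Measurable fun h => Q.queryAt h j *ᵥ x :=
    hQ.measurable_queryAt_mulVec j measurable_id measurable_const
  refine measurable_eexp.comp (Finset.measurable_sum _ fun j _ => Measurable.sub ?_ (by fun_prop))
  exact Finset.measurable_sum _ fun i _ =>
    ((measurable_pi_apply i).comp (hq j)).mul (by fun_prop)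

namespace Valid

lemma resp_resample {Q : QueryMaps N k (t + 1)} (hQ : Q.Valid) (x : Fin N → ℝ) (g : Fin k → ℝ)
    (G : Fin N → ℝ) :
    Q.resp (Q.headᵀ *ᵥ g + (1 - Q.headᵀ * Q.head) *ᵥ G + x)
      = vecCons (g + Q.head *ᵥ x) ((Q.tail (g + Q.head *ᵥ x)).resp (G + x)) := by
  have hhead : Q.head *ᵥ (Q.headᵀ *ᵥ g + (1 - Q.headᵀ * Q.head) *ᵥ G + x)
      = g + Q.head *ᵥ x := by
    simp only [mulVec_add, mulVec_mulVec, Matrix.mul_sub, ← Matrix.mul_assoc,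
      hQ.head_mul_transpose, Matrix.mul_one, Matrix.one_mul, sub_self, one_mulVec, zero_mulVec,
      add_zero]
  rw [resp_eq_vecCons, hhead]
  congr 1
  refine resp_congr fun j h => ?_
  simp only [mulVec_add, mulVec_mulVec, Matrix.mul_sub, ← Matrix.mul_assoc,
    hQ.tail_mul_head_transpose, Matrix.zero_mul, Matrix.mul_one, sub_zero, zero_mulVec, zero_add]

lemma measurable_vecCons_tail_resp {Q : QueryMaps N k (t + 1)} (hQ : Q.Valid) (x : Fin N → ℝ) :
    Measurable fun p : (Fin k → ℝ) × (Fin N → ℝ) =>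
      vecCons p.1 ((Q.tail p.1).resp (p.2 + x)) :=
  measurable_vecCons.comp (measurable_fst.prodMk ((QueryMaps.measurable_resp (Q := Q.tail)
    fun j i l => (hQ.1 j.succ i l).comp measurable_vecCons).comp
      (measurable_fst.prodMk (measurable_snd.add_const x))))

lemma lintegral_resp_add_succ {Q : QueryMaps N k (t + 1)} (hQ : Q.Valid) (x : Fin N → ℝ)
    {f : (Fin (t + 1) → Fin k → ℝ) → ℝ≥0∞} (hf : Measurable f) :
    ∫⁻ G, f (Q.resp (G + x)) ∂(𝒩 (Fin N))
      = ∫⁻ r, eexp ((Q.head *ᵥ x) ⬝ᵥ r - sqNorm (Q.head *ᵥ x) / 2) *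
          ∫⁻ G, f (vecCons r ((Q.tail r).resp (G + x))) ∂(𝒩 (Fin N)) ∂(𝒩 (Fin k)) := by
  have hresample := measurePreserving_resample_stdGaussian hQ.head_mul_transpose
  have hmeas : Measurable fun G => f (Q.resp (G + x)) :=
    hf.comp (hQ.measurable_resp.comp (measurable_id.add_const x))
  rw [← hresample.lintegral_comp hmeas]
  refine (lintegral_prod _ (hmeas.comp hresample.measurable).aemeasurable).trans ?_
  simp only [Function.comp_apply, hQ.resp_resample]
  exact lintegral_add_stdGaussian (Q.head *ᵥ x)
    (hf.comp (hQ.measurable_vecCons_tail_resp x)).lintegral_prod_right'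

/-- Orthonormality of the queries makes the responses to pure noise independent standard
Gaussians, so the transcript on the input `G + x` has an explicit density. -/
lemma lintegral_resp_add {Q : QueryMaps N k t} (hQ : Q.Valid) (x : Fin N → ℝ)
    {f : (Fin t → Fin k → ℝ) → ℝ≥0∞} (hf : Measurable f) :
    ∫⁻ G, f (Q.resp (G + x)) ∂(𝒩 (Fin N))
      = ∫⁻ h, eexp (Q.logLik x h) * f h ∂(noiseTranscript k t) := by
  induction t with
  | zero =>
    have hconst (h : Fin 0 → Fin k → ℝ) : f h = f Fin.elim0 := congrArg f (Subsingleton.elim _ _)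
    simp only [hconst, logLik, Finset.univ_eq_empty, Finset.sum_empty, eexp_zero, one_mul,
      lintegral_const, measure_univ]
  | succ t ih =>
    have hcons (r : Fin k → ℝ) : Measurable (vecCons r : (Fin t → Fin k → ℝ) → _) :=
      measurable_vecCons.comp measurable_prodMk_left
    rw [hQ.lintegral_resp_add_succ x hf, lintegral_noiseTranscript_succ
      (f := fun h => eexp (Q.logLik x h) * f h) ((hQ.measurable_eexp_logLik x).mul hf)]
    refine lintegral_congr fun r => ?_
    rw [ih (hQ.tail r) (f := fun h => f (vecCons r h)) (hf.comp (hcons r)),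
      ← lintegral_const_mul' _ _ (eexp_ne_top _)]
    simp only [logLik_vecCons, eexp_add, mul_assoc]

lemma lintegral_eexp_logLik {Q : QueryMaps N k t} (hQ : Q.Valid) (x : Fin N → ℝ) :
    ∫⁻ h, eexp (Q.logLik x h) ∂(noiseTranscript k t) = 1 := by
  simpa using (hQ.lintegral_resp_add x (f := fun _ => 1) measurable_const).symm

variable {Q : QueryMaps N k t} (hQ : Q.Valid)
include hQ

/-- Second-moment contiguity: `2 * logLik x - energy x` is again a log-likelihood, namely that of
`2 • x`, so large values of the density contribute little. -/
lemma stdGaussian_resp_add_mem_le {x : Fin N → ℝ} {F : Set (Fin t → Fin k → ℝ)}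
    (hF : MeasurableSet F) {B : ℝ} (hB : ∀ h ∈ F, Q.energy x h ≤ B) (b : ℝ) :
    𝒩 (Fin N) {G | Q.resp (G + x) ∈ F} ≤ eexp (B + b) * noiseTranscript k t F + eexp (-b) := by
  have hdensity (h : Fin t → Fin k → ℝ) : eexp (Q.logLik x h) * F.indicator 1 h
      ≤ eexp (B + b) * F.indicator 1 h + eexp (-b) * eexp (Q.logLik ((2 : ℝ) • x) h) := by
    by_cases hh : h ∈ F
    · rw [Set.indicator_of_mem hh, Pi.one_apply, mul_one, mul_one, ← eexp_add, logLik_two_smul]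
      rcases le_total (Q.logLik x h) (B + b) with hle | hge
      · exact le_add_right (eexp_le_eexp hle)
      · exact le_add_left (eexp_le_eexp (by linarith [hB h hh]))
    · simp [Set.indicator_of_notMem hh]
  have hind : Measurable (F.indicator (1 : (Fin t → Fin k → ℝ) → ℝ≥0∞)) :=
    measurable_one.indicator hF
  calc 𝒩 (Fin N) {G | Q.resp (G + x) ∈ F}
      = ∫⁻ G, F.indicator 1 (Q.resp (G + x)) ∂(𝒩 (Fin N)) :=
        (lintegral_indicator_one ((hQ.measurable_resp.comp (measurable_id.add_const x)) hF)).symm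
    _ = ∫⁻ h, eexp (Q.logLik x h) * F.indicator 1 h ∂(noiseTranscript k t) :=
        hQ.lintegral_resp_add x hind
    _ ≤ ∫⁻ h, eexp (B + b) * F.indicator 1 h + eexp (-b) * eexp (Q.logLik ((2 : ℝ) • x) h)
          ∂(noiseTranscript k t) := lintegral_mono hdensity
    _ = eexp (B + b) * noiseTranscript k t F + eexp (-b) := by
        rw [lintegral_add_left (hind.const_mul _), lintegral_const_mul' _ _ (eexp_ne_top _),
          lintegral_indicator_one hF, lintegral_const_mul' _ _ (eexp_ne_top _),
          hQ.lintegral_eexp_logLik, mul_one]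

/-- Under pure noise the transcript is independent of the signal; hence an event that is unlikely
for a fixed transcript and a random signal remains unlikely when the signal is present. -/
lemma prod_resp_add_mem_le {S : Type*} [MeasurableSpace S] {σ : Measure S}
    [IsProbabilityMeasure σ] {X : S → Fin N → ℝ} (hX : Measurable X)
    {D : Set (S × (Fin t → Fin k → ℝ))} (hD : MeasurableSet D) {B : ℝ}
    (hB : ∀ p ∈ D, Q.energy (X p.1) p.2 ≤ B) {q : ℝ≥0∞} (hq : ∀ h, σ {s | (s, h) ∈ D} ≤ q)
    (b : ℝ) :
    (σ.prod (𝒩 (Fin N))) {p | (p.1, Q.resp (p.2 + X p.1)) ∈ D}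
      ≤ eexp (B + b) * q + eexp (-b) := by
  have hshift : Measurable fun p : S × (Fin N → ℝ) => p.2 + X p.1 := by fun_prop
  have hmeas : MeasurableSet {p : S × (Fin N → ℝ) | (p.1, Q.resp (p.2 + X p.1)) ∈ D} :=
    (measurable_fst.prodMk (hQ.measurable_resp.comp hshift)) hD
  have hnoise : (σ.prod (noiseTranscript k t)) D ≤ q := by
    rw [Measure.prod_apply_symm hD]
    exact (lintegral_mono hq).trans (by simp)
  calc (σ.prod (𝒩 (Fin N))) {p | (p.1, Q.resp (p.2 + X p.1)) ∈ D}
      = ∫⁻ s, 𝒩 (Fin N) {G | Q.resp (G + X s) ∈ Prod.mk s ⁻¹' D} ∂σ := Measure.prod_apply hmeas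
    _ ≤ ∫⁻ s, eexp (B + b) * noiseTranscript k t (Prod.mk s ⁻¹' D) + eexp (-b) ∂σ := by
        refine lintegral_mono fun s => ?_
        have hDs : MeasurableSet (Prod.mk s ⁻¹' D) := measurable_prodMk_left hD
        exact hQ.stdGaussian_resp_add_mem_le (x := X s) hDs (fun h hh => hB (s, h) hh) b
    _ = eexp (B + b) * (σ.prod (noiseTranscript k t)) D + eexp (-b) := by
        rw [lintegral_add_right _ measurable_const, lintegral_const_mul' _ _ (eexp_ne_top _),
          ← Measure.prod_apply hD, lintegral_const, measure_univ, mul_one]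
    _ ≤ eexp (B + b) * q + eexp (-b) := by gcongr

end Valid

end QueryMaps

/-! ### Growth of the energy -/

namespace QueryMaps

variable {N k t : ℕ}

section EnergyGrowth

variable {S : Type*} [MeasurableSpace S] {σ : Measure S} [IsProbabilityMeasure σ]
  {X : S → Fin N → ℝ}

/-- As long as the energy stays below `B`, the queries of the last round are nearly independent of
the signal, so they can only capture what a fixed orthonormal family captures. -/
lemma Valid.prod_lt_energy_last_le {Q : QueryMaps N k (t + 1)} (hQ : Q.Valid) (hX : Measurable X)
    {a L B : ℝ} (hL : 0 < L) (htail : ∀ M : Matrix (Fin k) (Fin N) ℝ, M * Mᵀ = 1 →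
      ∀ T, σ {s | T < sqNorm (M *ᵥ X s)} ≤ eexp (a - T / L)) :
    (σ.prod (𝒩 (Fin N))) {p | Q.init.energy (X p.1) (Q.init.resp (p.2 + X p.1)) ≤ B ∧
        2 * L * B < sqNorm (Q (Fin.last t) (Q.init.resp (p.2 + X p.1)) *ᵥ X p.1)}
      ≤ 2 * eexp (-(B - a) / 2) := by
  have hXfst : Measurable fun p : S × (Fin t → Fin k → ℝ) => X p.1 := hX.comp measurable_fst
  have hD : MeasurableSet {p : S × (Fin t → Fin k → ℝ) | Q.init.energy (X p.1) p.2 ≤ B ∧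
      2 * L * B < sqNorm (Q (Fin.last t) p.2 *ᵥ X p.1)} :=
    (measurableSet_le (hQ.init.measurable_energy hXfst measurable_snd) measurable_const).inter
      (measurableSet_lt measurable_const
        (measurable_sqNorm.comp (hQ.measurable_mulVec (Fin.last t) measurable_snd hXfst)))
  refine (hQ.init.prod_resp_add_mem_le hX hD (fun p hp => hp.1) (q := eexp (a - 2 * B))
    (fun h => ?_) ((B - a) / 2)).trans_eq ?_
  · refine (measure_mono fun s hs => hs.2).trans
      ((htail _ (hQ.2.1 (Fin.last t) h) (2 * L * B)).trans_eq ?_)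
    congr 1
    field_simp
  · rw [← eexp_add, two_mul (eexp _)]
    congr 2 <;> ring

lemma Valid.prod_lt_energy_le {Q : QueryMaps N k t} (hQ : Q.Valid) (hX : Measurable X)
    {a L B : ℝ} (hL : 0 < L) (hB : 0 ≤ B) (htail : ∀ M : Matrix (Fin k) (Fin N) ℝ, M * Mᵀ = 1 →
      ∀ T, σ {s | T < sqNorm (M *ᵥ X s)} ≤ eexp (a - T / L)) :
    (σ.prod (𝒩 (Fin N)))
        {p | B * (2 * L + 1) ^ t < Q.energy (X p.1) (Q.resp (p.2 + X p.1))}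
      ≤ ∑ j ∈ Finset.range t, 2 * eexp (-(B * (2 * L + 1) ^ j - a) / 2) := by
  induction t with
  | zero => simp [energy, not_lt.2 hB]
  | succ t ih =>
    rw [Finset.sum_range_succ]
    refine (measure_mono fun p hp => ?_).trans ((measure_union_le _ _).trans
      (add_le_add (ih hQ.init)
        (hQ.prod_lt_energy_last_le hX (B := B * (2 * L + 1) ^ t) hL htail)))
    rw [Set.mem_ofPred_eq, energy_succ, init_resp, pow_succ] at hp
    refine (lt_or_ge (B * (2 * L + 1) ^ t) _).imp id fun hle => ⟨hle, ?_⟩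
    linarith

end EnergyGrowth

end QueryMaps

/-! ### Operator norm of a Gaussian matrix -/

section GaussianOperatorNorm

variable {n : ℕ}

/-- The `n × n` matrix with a given flattening, that is, the inverse of `vec`. -/
def mat (G : Fin (n * n) → ℝ) : Matrix (Fin n) (Fin n) ℝ :=
  Matrix.of fun i j => G (finProdFinEquiv (i, j))

lemma vec_mat (G : Fin (n * n) → ℝ) : _root_.vec n (mat G) = G := by
  funext i
  simp only [_root_.vec, mat, of_apply, Prod.mk.eta, Equiv.apply_symm_apply]

lemma continuous_mat : Continuous (mat : (Fin (n * n) → ℝ) → Matrix (Fin n) (Fin n) ℝ) := by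
  unfold mat
  fun_prop

lemma dotProduct_mat_mulVec (G : Fin (n * n) → ℝ) (z x : Fin n → ℝ) :
    z ⬝ᵥ (mat G *ᵥ x) = tensor z x ⬝ᵥ G := by
  rw [dotProduct_comm (tensor z x), dotProduct_tensor]
  simp only [dotProduct, mulVec, mat, of_apply, Finset.mul_sum]
  exact Finset.sum_congr rfl fun i _ => Finset.sum_congr rfl fun j _ => by ring

lemma lintegral_eexp_sqNorm_mat_mulVec_le {l : ℝ} (hl : 0 ≤ l) {x : Fin n → ℝ}
    (hx : l * sqNorm x ≤ 1 / 4) :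
    ∫⁻ G, eexp (l * sqNorm (mat G *ᵥ x)) ∂(𝒩 (Fin (n * n))) ≤ eexp (2 * l * (n * sqNorm x)) := by
  let V : Matrix (Fin n) (Fin (n * n)) ℝ := Matrix.of fun i => tensor (Pi.single i 1) x
  have hV (G : Fin (n * n) → ℝ) : mat G *ᵥ x = V *ᵥ G := by
    funext i
    rw [← single_one_dotProduct i (mat G *ᵥ x), dotProduct_mat_mulVec]
    rfl
  have hVt (z : Fin n → ℝ) : Vᵀ *ᵥ z = tensor z x := by
    funext i
    simp [V, mulVec, dotProduct, tensor, _root_.vec, Pi.single_apply, mul_comm]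
  have hfrob : frobSq V = n * sqNorm x := by
    calc frobSq V = ∑ i : Fin n, sqNorm (tensor (Pi.single i 1) x) := rfl
      _ = n * sqNorm x := by simp [sqNorm_tensor, sqNorm_single]
  have hspec : specNorm V ^ 2 ≤ sqNorm x := by
    rw [← specNorm_transpose]
    exact specNorm_sq_le_of_sqNorm_mulVec_le (sqNorm_nonneg x) fun z => by
      rw [hVt, sqNorm_tensor, mul_comm]
  simp only [hV, ← hfrob]
  exact lintegral_eexp_sqNorm_mulVec_stdGaussian_le V hl
    ((mul_le_mul_of_nonneg_left hspec hl).trans hx)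

/-- By convexity and the parallelogram identity, the average of `exp (l ‖A x‖²)` over two points
symmetric about `x₀` is at least `exp (l ‖A x₀‖²)`. -/
lemma eexp_mul_measure_ball_le_setLIntegral {E F : Type*} [NormedAddCommGroup E] [NormedSpace ℝ E]
    [MeasurableSpace E] [BorelSpace E] [NormedAddCommGroup F] [InnerProductSpace ℝ F]
    {μ : Measure E} [μ.IsAddLeftInvariant] [μ.IsNegInvariant] (A : E →L[ℝ] F) {l : ℝ}
    (hl : 0 ≤ l) {x₀ : E} {r s : ℝ} (hx₀ : ‖x₀‖ ≤ r) :
    eexp (l * ‖A x₀‖ ^ 2) * μ (Metric.ball 0 s)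
      ≤ ∫⁻ x in Metric.ball 0 (r + s), eexp (l * ‖A x‖ ^ 2) ∂μ := by
  let f (x : E) : ℝ≥0∞ := eexp (l * ‖A x‖ ^ 2)
  have hf : Measurable f := measurable_eexp.comp (by fun_prop : Continuous _).measurable
  have htwo (d : E) : 2 * f x₀ ≤ f (x₀ + d) + f (x₀ - d) := by
    refine two_mul_eexp_le ?_
    have := parallelogram_law_with_norm ℝ (A x₀) (A d)
    rw [map_add, map_sub, ← mul_add]
    nlinarith [mul_nonneg hl (mul_self_nonneg ‖A d‖)]
  have hshift {T : E → E} (hT : MeasurePreserving T μ μ) (hT_le : ∀ d, ‖T d‖ ≤ ‖x₀‖ + ‖d‖) :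
      ∫⁻ d in Metric.ball 0 s, f (T d) ∂μ ≤ ∫⁻ x in Metric.ball 0 (r + s), f x ∂μ := by
    rw [← hT.setLIntegral_comp_preimage measurableSet_ball hf]
    refine lintegral_mono_set fun d hd => ?_
    rw [Set.mem_preimage, mem_ball_zero_iff] at *
    linarith [hT_le d]
  have hdouble : 2 * (f x₀ * μ (Metric.ball 0 s))
      ≤ 2 * ∫⁻ x in Metric.ball 0 (r + s), f x ∂μ := by
    calc 2 * (f x₀ * μ (Metric.ball 0 s)) = ∫⁻ _ in Metric.ball (0 : E) s, 2 * f x₀ ∂μ := by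
          rw [setLIntegral_const, mul_assoc]
      _ ≤ ∫⁻ d in Metric.ball 0 s, f (x₀ + d) + f (x₀ - d) ∂μ := lintegral_mono htwo
      _ ≤ 2 * ∫⁻ x in Metric.ball 0 (r + s), f x ∂μ := by
          rw [lintegral_add_left (by fun_prop), two_mul (lintegral _ _)]
          exact add_le_add (hshift (measurePreserving_add_left μ x₀) (norm_add_le x₀))
            (hshift (Measure.measurePreserving_sub_left μ x₀) (norm_sub_le x₀))
  exact (ENNReal.mul_le_mul_iff_right two_ne_zero ENNReal.ofNat_ne_top).1 hdouble

/-- A moment of `‖A x‖`, with `x` uniform on a ball, that detects a large operator norm of `A`; it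
replaces a union bound over a net of the sphere. -/
def ballMoment (A : Matrix (Fin n) (Fin n) ℝ) : ℝ≥0∞ :=
  ∫⁻ x in Metric.ball (0 : EuclideanSpace ℝ (Fin n)) (3 / 2), eexp (1 / 9 * sqNorm (A *ᵥ x.ofLp))

lemma measurable_eexp_sqNorm_mat_mulVec :
    Measurable fun p : (Fin (n * n) → ℝ) × EuclideanSpace ℝ (Fin n) =>
      eexp (1 / 9 * sqNorm (mat p.1 *ᵥ p.2.ofLp)) :=
  measurable_eexp.comp (Continuous.measurable (continuous_const.mul (continuous_sqNorm.comp
    ((continuous_mat.comp continuous_fst).matrix_mulVec (by fun_prop)))))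

lemma eexp_mul_volume_ball_le_ballMoment {A : Matrix (Fin n) (Fin n) ℝ} {T : ℝ} (hT : 0 ≤ T)
    (hA : T < specNorm A) :
    eexp (T ^ 2 / 9) * volume (Metric.ball (0 : EuclideanSpace ℝ (Fin n)) (1 / 2))
      ≤ ballMoment A := by
  obtain ⟨x, hx, hTx⟩ := exists_lt_sqNorm_mulVec_of_lt_specNorm hT hA
  have hnorm (y : EuclideanSpace ℝ (Fin n)) :
      ‖toEuclideanCLM (𝕜 := ℝ) A y‖ ^ 2 = sqNorm (A *ᵥ y.ofLp) := by
    rw [sqNorm_eq_norm_toLp_sq]; rfl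
  have hx_norm : ‖WithLp.toLp 2 x‖ ≤ 1 := by
    rwa [sqNorm_eq_norm_toLp_sq, sq_le_one_iff₀ (norm_nonneg _)] at hx
  have hball := eexp_mul_measure_ball_le_setLIntegral (μ := volume) (s := 1 / 2)
    (toEuclideanCLM (𝕜 := ℝ) A) (l := 1 / 9) (by norm_num) hx_norm
  norm_num only [hnorm] at hball
  refine (mul_le_mul_left (eexp_le_eexp ?_) _).trans hball
  linarith

lemma lintegral_ballMoment_mat_le :
    ∫⁻ G, ballMoment (mat G) ∂(𝒩 (Fin (n * n)))
      ≤ eexp (5 / 2 * n) * volume (Metric.ball (0 : EuclideanSpace ℝ (Fin n)) (1 / 2)) := by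
  have hmoment (x : EuclideanSpace ℝ (Fin n)) (hx : x ∈ Metric.ball 0 (3 / 2)) :
      ∫⁻ G, eexp (1 / 9 * sqNorm (mat G *ᵥ x.ofLp)) ∂(𝒩 (Fin (n * n))) ≤ eexp (n / 2) := by
    have hx_sq : sqNorm x.ofLp ≤ 9 / 4 := by
      rw [sqNorm_eq_norm_toLp_sq, WithLp.toLp_ofLp]
      nlinarith [norm_nonneg x, mem_ball_zero_iff.1 hx]
    refine (lintegral_eexp_sqNorm_mat_mulVec_le (by norm_num) (by linarith)).trans
      (eexp_le_eexp ?_)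
    nlinarith [mul_le_mul_of_nonneg_left hx_sq (n.cast_nonneg : (0 : ℝ) ≤ n)]
  have hthree : ENNReal.ofReal (3 ^ n) ≤ eexp (2 * n) := by
    rw [eexp, mul_comm, Real.exp_nat_mul]
    gcongr
    linarith [Real.add_one_le_exp 2]
  calc ∫⁻ G, ballMoment (mat G) ∂(𝒩 (Fin (n * n)))
      = ∫⁻ x in Metric.ball (0 : EuclideanSpace ℝ (Fin n)) (3 / 2),
          ∫⁻ G, eexp (1 / 9 * sqNorm (mat G *ᵥ x.ofLp)) ∂(𝒩 (Fin (n * n))) :=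
        lintegral_lintegral_swap measurable_eexp_sqNorm_mat_mulVec.aemeasurable
    _ ≤ eexp (n / 2) * volume (Metric.ball (0 : EuclideanSpace ℝ (Fin n)) (3 / 2)) :=
        (setLIntegral_mono measurable_const hmoment).trans_eq (setLIntegral_const _ _)
    _ = eexp (n / 2) * (ENNReal.ofReal (3 ^ n)
          * volume (Metric.ball (0 : EuclideanSpace ℝ (Fin n)) (1 / 2))) := by
        rw [show (3 / 2 : ℝ) = 3 * (1 / 2) by norm_num,
          Measure.addHaar_ball_mul_of_pos _ _ three_pos, finrank_euclideanSpace_fin]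
    _ ≤ eexp (n / 2) * (eexp (2 * n)
          * volume (Metric.ball (0 : EuclideanSpace ℝ (Fin n)) (1 / 2))) := by gcongr
    _ = eexp (5 / 2 * n) * volume (Metric.ball (0 : EuclideanSpace ℝ (Fin n)) (1 / 2)) := by
        rw [← mul_assoc, ← eexp_add]
        congr 2
        ring

lemma stdGaussian_lt_specNorm_mat_le {T : ℝ} (hT : 0 ≤ T) :
    𝒩 (Fin (n * n)) {G | T < specNorm (mat G)} ≤ eexp (5 / 2 * n - T ^ 2 / 9) := by
  let v := volume (Metric.ball (0 : EuclideanSpace ℝ (Fin n)) (1 / 2))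
  have hv_ne_zero : v ≠ 0 := (Metric.measure_ball_pos _ _ (by norm_num)).ne'
  have hv_ne_top : v ≠ ∞ := measure_ball_lt_top.ne
  calc 𝒩 (Fin (n * n)) {G | T < specNorm (mat G)}
      ≤ 𝒩 (Fin (n * n)) {G | eexp (T ^ 2 / 9) * v ≤ ballMoment (mat G)} :=
        measure_mono fun G => eexp_mul_volume_ball_le_ballMoment hT
    _ ≤ (∫⁻ G, ballMoment (mat G) ∂(𝒩 (Fin (n * n)))) / (eexp (T ^ 2 / 9) * v) :=
        meas_ge_le_lintegral_div
          measurable_eexp_sqNorm_mat_mulVec.lintegral_prod_right'.aemeasurable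
          (mul_ne_zero (eexp_ne_zero _) hv_ne_zero) (ENNReal.mul_ne_top (eexp_ne_top _) hv_ne_top)
    _ ≤ eexp (5 / 2 * n - T ^ 2 / 9) := by
        refine ENNReal.div_le_of_le_mul (lintegral_ballMoment_mat_le.trans_eq ?_)
        rw [← mul_assoc, ← eexp_add, sub_add_cancel]

end GaussianOperatorNorm

/-! ### The hidden spike -/

section Spike

variable {n : ℕ}

lemma mat_tensor (u v : Fin n → ℝ) : mat (tensor u v) = vecMulVec u v := by
  ext i j
  simp [mat, tensor, _root_.vec, vecMulVec_apply]

lemma mat_add (G x : Fin (n * n) → ℝ) : mat (G + x) = mat G + mat x := rfl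

lemma mat_smul (c : ℝ) (x : Fin (n * n) → ℝ) : mat (c • x) = c • mat x := rfl

/-- The law of a pair of independent uniformly random sign vectors. -/
def signPairs (n : ℕ) : Measure ((Fin n → ℝ) × (Fin n → ℝ)) :=
  (randomSigns (Fin n)).prod (randomSigns (Fin n))

instance isProbabilityMeasure_signPairs : IsProbabilityMeasure (signPairs n) := by
  unfold signPairs; infer_instance

lemma ae_sqNorm_signPairs : ∀ᵐ p ∂(signPairs n), sqNorm p.1 = n ∧ sqNorm p.2 = n := by
  have hcard := ae_sqNorm_randomSigns (ι := Fin n)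
  rw [Fintype.card_fin] at hcard
  exact (Measure.quasiMeasurePreserving_fst.ae hcard).and
    (Measure.quasiMeasurePreserving_snd.ae hcard)

/-- The flattened matrix `(72 / √n) • u vᵀ`, of operator norm `72 √n` for sign vectors. The norm is
twelve times the bound `6 √n` for the norm of the noise. -/
def spike (p : (Fin n → ℝ) × (Fin n → ℝ)) : Fin (n * n) → ℝ := (72 / √n) • tensor p.1 p.2

lemma measurable_spike : Measurable (spike (n := n)) :=
  (continuous_tensor.const_smul (72 / √(n : ℝ))).measurable

lemma mat_spike (p : (Fin n → ℝ) × (Fin n → ℝ)) :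
    mat (spike p) = (72 / √n) • vecMulVec p.1 p.2 := by
  rw [spike, mat_smul, mat_tensor]

lemma rank_mat_spike_le (p : (Fin n → ℝ) × (Fin n → ℝ)) : (mat (spike p)).rank ≤ 1 := by
  rw [mat_spike, ← smul_vecMulVec]
  exact rank_vecMulVec_le _ _

lemma dotProduct_mat_spike_mulVec (p q : (Fin n → ℝ) × (Fin n → ℝ)) :
    q.1 ⬝ᵥ (mat (spike p) *ᵥ q.2) = 72 / √n * ((q.1 ⬝ᵥ p.1) * (p.2 ⬝ᵥ q.2)) := by
  rw [mat_spike, smul_mulVec, dotProduct_smul, vecMulVec_mulVec, op_smul_eq_smul, dotProduct_smul,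
    smul_eq_mul, smul_eq_mul, mul_comm (p.2 ⬝ᵥ q.2)]

lemma signPairs_lt_sqNorm_mulVec_spike_le (hn : 0 < n) {k : ℕ} {M : Matrix (Fin k) (Fin (n * n)) ℝ}
    (hM : M * Mᵀ = 1) (T : ℝ) :
    signPairs n {p | T < sqNorm (M *ᵥ spike p)} ≤ eexp (k / n / 2 - T / 41472) := by
  have hn' : (0 : ℝ) < n := Nat.cast_pos.2 hn
  have hnorm : ∀ᵐ v ∂(randomSigns (Fin n)), sqNorm v ≤ n := by
    filter_upwards [ae_sqNorm_randomSigns] with v hv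
    simp [hv]
  refine (measure_mono fun p (hp : T < _) => ?_).trans
    ((prod_measure_le_sqNorm_mulVec_tensor_le hn hM isSubGaussianVec_randomSigns
      isSubGaussianVec_randomSigns hnorm (n * T / 5184)).trans (eexp_le_eexp ?_))
  · rw [spike, mulVec_smul, sqNorm_smul, div_pow, Real.sq_sqrt hn'.le, div_mul_eq_mul_div,
      lt_div_iff₀ hn'] at hp
    rw [Set.mem_ofPred_eq]
    linarith
  · rw [Fintype.card_fin]
    exact le_of_eq (by field_simp; ring)

lemma half_le_abs_dotProduct_of_specNorm_spike_sub_le (hn : 0 < n)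
    {p q : (Fin n → ℝ) × (Fin n → ℝ)} (hp₂ : sqNorm p.2 = n) (hq₁ : sqNorm q.1 = n)
    (hq₂ : sqNorm q.2 = n) (hpq : specNorm (mat (spike q) - mat (spike p)) ≤ 36 * √n) :
    (n : ℝ) / 2 ≤ |q.1 ⬝ᵥ p.1| := by
  have hs : 0 < √(n : ℝ) := Real.sqrt_pos.2 (Nat.cast_pos.2 hn)
  have hss : √(n : ℝ) * √n = n := Real.mul_self_sqrt n.cast_nonneg
  have hbound : |72 / √n * ((n : ℝ) * n - (q.1 ⬝ᵥ p.1) * (p.2 ⬝ᵥ q.2))| ≤ 36 * √n * n := by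
    have h := abs_dotProduct_mulVec_le q.1 (mat (spike q) - mat (spike p)) q.2
    rw [sub_mulVec, dotProduct_sub, dotProduct_mat_spike_mulVec, dotProduct_mat_spike_mulVec,
      ← sqNorm_eq_dotProduct_self, ← sqNorm_eq_dotProduct_self, hq₁, hq₂, hss, ← mul_sub] at h
    exact h.trans (mul_le_mul_of_nonneg_right hpq n.cast_nonneg)
  have hprod : (n : ℝ) * n / 2 ≤ (q.1 ⬝ᵥ p.1) * (p.2 ⬝ᵥ q.2) := by
    have h := (le_abs_self _).trans hbound
    rw [div_mul_eq_mul_div, div_le_iff₀ hs, mul_right_comm, mul_assoc 36, hss] at h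
    linarith
  have hv : |p.2 ⬝ᵥ q.2| ≤ n := by
    simpa only [hp₂, hq₂, hss] using abs_dotProduct_le p.2 q.2
  refine le_of_mul_le_mul_right ?_ (Nat.cast_pos.2 hn : (0 : ℝ) < n)
  calc (n : ℝ) / 2 * n = n * n / 2 := by ring
    _ ≤ |q.1 ⬝ᵥ p.1| * |p.2 ⬝ᵥ q.2| := hprod.trans ((le_abs_self _).trans (abs_mul _ _).le)
    _ ≤ |q.1 ⬝ᵥ p.1| * n := by gcongr

lemma signPairs_specNorm_spike_sub_le (hn : 0 < n) (B : Matrix (Fin n) (Fin n) ℝ) :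
    signPairs n {p | specNorm (mat (spike p) - B) ≤ 18 * √n} ≤ 2 * eexp (-(n / 8)) := by
  by_cases hnull : signPairs n {p | specNorm (mat (spike p) - B) ≤ 18 * √n} = 0
  · exact hnull.trans_le zero_le
  obtain ⟨q, hqB, hq₁, hq₂⟩ :=
    Measure.exists_mem_of_measure_ne_zero_of_ae hnull (ae_restrict_of_ae ae_sqNorm_signPairs)
  calc signPairs n {p | specNorm (mat (spike p) - B) ≤ 18 * √n}
      ≤ signPairs n (Prod.fst ⁻¹' {u | (n : ℝ) / 2 ≤ |q.1 ⬝ᵥ u|}) := by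
        refine measure_mono_ae (ae_sqNorm_signPairs.mono fun p hp (hpB : _ ≤ _) => ?_)
        refine half_le_abs_dotProduct_of_specNorm_spike_sub_le hn hp.2 hq₁ hq₂ ?_
        rw [Set.mem_ofPred_eq] at hqB
        have h := specNorm_sub_le_specNorm_sub_add_specNorm_sub (mat (spike q)) B (mat (spike p))
        rw [specNorm_sub_comm B] at h
        linarith
    _ ≤ randomSigns (Fin n) {u | (n : ℝ) / 2 ≤ |q.1 ⬝ᵥ u|} :=
        measurePreserving_fst.measure_preimage_le _
    _ ≤ 2 * eexp (-(n / 8)) := by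
        refine (isSubGaussianVec_randomSigns.measure_le_abs_dotProduct_le q.1
          (by positivity)).trans_eq ?_
        rw [hq₁]
        congr 2
        field_simp
        norm_num

end Spike

/-! ### Few rounds do not reveal the spike -/

lemma sum_two_mul_eexp_neg_mul_pow_le {K : ℝ} (hK : 2 ≤ K) (t : ℕ) :
    ∑ j ∈ Finset.range t, 2 * eexp (-(7 * K ^ j)) ≤ 2⁻¹ ^ 5 := by
  have hpow (j : ℕ) : (j + 7 : ℕ) ≤ 7 * K ^ j := by
    have hbern := one_add_mul_le_pow (a := K - 1) (by linarith) j
    rw [add_sub_cancel] at hbern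
    push_cast
    nlinarith [Nat.cast_nonneg (α := ℝ) j]
  calc ∑ j ∈ Finset.range t, 2 * eexp (-(7 * K ^ j))
      ≤ ∑ j ∈ Finset.range t, 2 * 2⁻¹ ^ 7 * 2⁻¹ ^ j := Finset.sum_le_sum fun j _ => by
        rw [mul_assoc, ← pow_add, add_comm 7]
        gcongr
        exact (eexp_le_eexp (neg_le_neg (hpow j))).trans (eexp_neg_natCast_le _)
    _ ≤ 2 * 2⁻¹ ^ 7 * 2 := by
        rw [← Finset.mul_sum]
        gcongr
        exact (ENNReal.sum_le_tsum _).trans_eq ENNReal.tsum_geometric_two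
    _ = 2⁻¹ ^ 5 := by
        rw [← ENNReal.toReal_eq_toReal_iff' (by finiteness) (by finiteness)]
        norm_num

section FewRounds

variable {n k t : ℕ}

section Deterministic

variable {Q : QueryMaps (n * n) k t} (hQ : Q.Valid)
include hQ

lemma prod_lt_energy_spike_le (hn : 0 < n) (hk : n ≤ k)
    (hK : 232 * 82945 ^ t * (k : ℝ) ≤ (n : ℝ) ^ 2) :
    ((signPairs n).prod (𝒩 (Fin (n * n))))
        {p | (n : ℝ) / 16 < Q.energy (spike p.1) (Q.resp (p.2 + spike p.1))} ≤ 2⁻¹ ^ 5 := by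
  have hn' : (0 : ℝ) < n := Nat.cast_pos.2 hn
  have hkn : 1 ≤ (k / n : ℝ) := (one_le_div hn').2 (Nat.cast_le.2 hk)
  have htotal : 29 / 2 * (k / n : ℝ) * (2 * 41472 + 1) ^ t ≤ n / 16 := by
    rw [div_mul_div_comm, div_mul_eq_mul_div, div_le_div_iff₀ (by positivity) (by norm_num)]
    norm_num
    linarith
  calc _ ≤ ∑ j ∈ Finset.range t,
          2 * eexp (-(29 / 2 * (k / n : ℝ) * (2 * 41472 + 1) ^ j - k / n / 2) / 2) :=
        (measure_mono fun p hp => htotal.trans_lt hp).trans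
          (hQ.prod_lt_energy_le measurable_spike (by norm_num) (by positivity) fun M hM T =>
            signPairs_lt_sqNorm_mulVec_spike_le hn hM T)
    _ ≤ ∑ j ∈ Finset.range t, 2 * eexp (-(7 * (2 * 41472 + 1) ^ j)) := by
        gcongr with j
        have hone : (1 : ℝ) ≤ (2 * 41472 + 1) ^ j := one_le_pow₀ (by norm_num)
        generalize (2 * 41472 + 1 : ℝ) ^ j = x at hone ⊢
        linarith [le_mul_of_one_le_left (zero_le_one.trans hone) hkn,
          le_mul_of_one_le_right (zero_le_one.trans hkn) hone]
    _ ≤ 2⁻¹ ^ 5 := sum_two_mul_eexp_neg_mul_pow_le (by norm_num) t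

variable {out : (Fin t → Fin k → ℝ) → Matrix (Fin n) (Fin n) ℝ}
  (hout : ∀ i j, Measurable fun h => out h i j)
include hout

lemma prod_energy_spike_le_and_specNorm_spike_sub_out_le (hn : 200 ≤ n) :
    ((signPairs n).prod (𝒩 (Fin (n * n))))
        {p | Q.energy (spike p.1) (Q.resp (p.2 + spike p.1)) ≤ n / 16 ∧
          specNorm (mat (spike p.1) - out (Q.resp (p.2 + spike p.1))) ≤ 18 * √n}
      ≤ 2⁻¹ ^ 6 + 2⁻¹ ^ 5 := by
  have hn' : (200 : ℝ) ≤ n := Nat.ofNat_le_cast.2 hn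
  have hspike : Measurable fun p : ((Fin n → ℝ) × (Fin n → ℝ)) × (Fin t → Fin k → ℝ) =>
    spike p.1 := measurable_spike.comp measurable_fst
  have hD : MeasurableSet {p : ((Fin n → ℝ) × (Fin n → ℝ)) × (Fin t → Fin k → ℝ) |
      Q.energy (spike p.1) p.2 ≤ n / 16 ∧ specNorm (mat (spike p.1) - out p.2) ≤ 18 * √n} := by
    refine (measurableSet_le (hQ.measurable_energy hspike measurable_snd) measurable_const).inter
      (measurableSet_le (measurable_specNorm fun i j => ?_) measurable_const)
    exact ((measurable_pi_apply _).comp hspike).sub ((hout i j).comp measurable_snd)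
  calc _ ≤ eexp (n / 16 + 5) * (2 * eexp (-(n / 8))) + eexp (-5) :=
        hQ.prod_resp_add_mem_le measurable_spike hD (fun p hp => hp.1) (fun h =>
          (measure_mono fun s hs => hs.2).trans
            (signPairs_specNorm_spike_sub_le (by omega) (out h))) 5
    _ ≤ 2 * eexp (-(7 : ℕ)) + eexp (-(5 : ℕ)) := by
        rw [mul_left_comm, ← eexp_add]
        gcongr
        · push_cast
          linarith
        · norm_num
    _ ≤ 2 * 2⁻¹ ^ 7 + 2⁻¹ ^ 5 := by gcongr <;> exact eexp_neg_natCast_le _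
    _ = 2⁻¹ ^ 6 + 2⁻¹ ^ 5 := by
        rw [pow_succ' _ 6, ← mul_assoc, ENNReal.mul_inv_cancel two_ne_zero ENNReal.ofNat_ne_top,
          one_mul]

lemma prod_specNorm_spike_sub_out_le (hn : 200 ≤ n) (hk : n ≤ k)
    (hK : 232 * 82945 ^ t * (k : ℝ) ≤ (n : ℝ) ^ 2) :
    ((signPairs n).prod (𝒩 (Fin (n * n))))
        {p | specNorm (mat (spike p.1) - out (Q.resp (p.2 + spike p.1))) ≤ 18 * √n}
      ≤ 2⁻¹ ^ 3 := by
  have hnum : (2⁻¹ : ℝ≥0∞) ^ 5 + (2⁻¹ ^ 6 + 2⁻¹ ^ 5) ≤ 2⁻¹ ^ 3 := by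
    rw [← ENNReal.toReal_le_toReal (by finiteness) (by finiteness),
      ENNReal.toReal_add (by finiteness) (by finiteness),
      ENNReal.toReal_add (by finiteness) (by finiteness)]
    norm_num
  refine (measure_mono fun p hp => ?_).trans ((measure_union_le _ _).trans
    ((add_le_add (prod_lt_energy_spike_le hQ (by omega) hk hK)
      (prod_energy_spike_le_and_specNorm_spike_sub_out_le hQ hout hn)).trans hnum))
  exact (lt_or_ge ((n : ℝ) / 16) _).imp id fun hle => ⟨hle, hp⟩

end Deterministic

lemma half_le_prod_specNorm_mat_le {S : Type*} [MeasurableSpace S] {σ : Measure S}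
    [IsProbabilityMeasure σ] (hn : 0 < n) :
    2⁻¹ ≤ (σ.prod (𝒩 (Fin (n * n)))) {p | specNorm (mat p.2) ≤ 6 * √n} := by
  have hn' : (1 : ℝ) ≤ n := Nat.one_le_cast.2 hn
  have hlarge : (σ.prod (𝒩 (Fin (n * n)))) {p | 6 * √n < specNorm (mat p.2)} ≤ 2⁻¹ :=
    calc _ ≤ 𝒩 (Fin (n * n)) {G | 6 * √n < specNorm (mat G)} :=
          measurePreserving_snd.measure_preimage_le _
      _ ≤ eexp (-(1 : ℕ)) := by
          refine (stdGaussian_lt_specNorm_mat_le (by positivity)).trans (eexp_le_eexp ?_)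
          rw [mul_pow, Real.sq_sqrt n.cast_nonneg]
          push_cast
          linarith
      _ ≤ 2⁻¹ := (eexp_neg_natCast_le 1).trans_eq (pow_one _)
  rw [← ENNReal.one_sub_inv_two, tsub_le_iff_right,
    ← measure_univ (μ := σ.prod (𝒩 (Fin (n * n))))]
  refine (measure_univ_le_add_compl _).trans (add_le_add_right (le_trans ?_ hlarge) _)
  exact measure_mono fun p (hp : ¬ specNorm (mat p.2) ≤ 6 * √n) => not_le.1 hp

section Randomized

variable {r : ℕ} {Ω : Type*} [MeasurableSpace Ω] {μ : Measure Ω} [IsProbabilityMeasure μ]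

lemma sq_lt_of_half_lt_measure_specNorm_sub_le {Q : Ω → QueryMaps (n * n) k t}
    {out : Ω → (Fin t → Fin k → ℝ) → Matrix (Fin n) (Fin n) ℝ} (hQ : ∀ ω, (Q ω).Valid)
    (hQm : ∀ (j : Fin t) (i : Fin k) (l : Fin (n * n)),
      Measurable fun p : Ω × (Fin (j : ℕ) → Fin k → ℝ) => Q p.1 j p.2 i l)
    (hout : ∀ i j, Measurable fun p : Ω × (Fin t → Fin k → ℝ) => out p.1 p.2 i j)
    (hsucc : ∀ A : Matrix (Fin n) (Fin n) ℝ, 2⁻¹ < μ {ω |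
      specNorm (A - out ω ((Q ω).resp (_root_.vec n A))) ≤ 2 * singVal A (r + 1)})
    (hn : 200 ≤ n) (hr : 1 ≤ r) (hk : n ≤ k) : (n : ℝ) ^ 2 < 232 * 82945 ^ t * (k : ℝ) := by
  by_contra! hK
  let P := (signPairs n).prod (𝒩 (Fin (n * n)))
  let E := {q : Ω × (((Fin n → ℝ) × (Fin n → ℝ)) × (Fin (n * n) → ℝ)) |
    specNorm (mat (spike q.2.1) - out q.1 ((Q q.1).resp (q.2.2 + spike q.2.1))) ≤ 18 * √n}
  have hE : MeasurableSet E := by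
    have hspike := measurable_spike (n := n)
    refine measurableSet_le (measurable_specNorm fun i j => ?_) measurable_const
    have hinput : Measurable fun q : Ω × (((Fin n → ℝ) × (Fin n → ℝ)) × (Fin (n * n) → ℝ)) =>
      (q.1, q.2.2 + spike q.2.1) := by fun_prop
    exact ((measurable_pi_apply (finProdFinEquiv (i, j))).comp (hspike.comp measurable_snd.fst)).sub
      ((hout i j).comp (measurable_fst.prodMk ((QueryMaps.measurable_resp hQm).comp hinput)))
  have hupper : (μ.prod P) E ≤ 2⁻¹ ^ 3 := by
    rw [Measure.prod_apply hE]
    refine (lintegral_mono fun ω => prod_specNorm_spike_sub_out_le (hQ ω)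
      (fun i j => (hout i j).comp measurable_prodMk_left) hn hk hK).trans_eq (by simp)
  have hlower : 2⁻¹ * 2⁻¹ ≤ (μ.prod P) E := by
    rw [Measure.prod_apply_symm hE]
    refine le_trans ?_ (mul_meas_ge_le_lintegral (measurable_measure_prodMk_right hE) 2⁻¹)
    gcongr
    refine (half_le_prod_specNorm_mat_le (σ := signPairs n) (by omega)).trans
      (measure_mono fun p hp => ?_)
    refine (hsucc (mat (p.2 + spike p.1))).le.trans (measure_mono fun ω hω => ?_)
    rw [Set.mem_ofPred_eq] at hp hω
    rw [vec_mat, mat_add] at hω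
    have h := specNorm_sub_le_of_specNorm_add_sub_le ((rank_mat_spike_le p.1).trans hr)
      zero_le_two hω
    change specNorm _ ≤ _
    linarith
  have hlt : (2⁻¹ : ℝ≥0∞) ^ 3 < 2⁻¹ * 2⁻¹ := by
    rw [← ENNReal.toReal_lt_toReal (by finiteness) (by finiteness)]
    norm_num
  exact (hlower.trans hupper).not_gt hlt

lemma not_forall_half_lt_measure_specNorm_sub_le {B : Ω → Matrix (Fin n) (Fin n) ℝ}
    (hB : ∀ i j, Measurable fun ω => B ω i j) (hn : 0 < n) (hr : 1 ≤ r) :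
    ¬ ∀ A : Matrix (Fin n) (Fin n) ℝ,
      2⁻¹ < μ {ω | specNorm (A - B ω) ≤ 2 * singVal A (r + 1)} := by
  intro hsucc
  let J : Matrix (Fin n) (Fin n) ℝ := vecMulVec 1 1
  have hJ : MeasurableSet {ω | specNorm (J - B ω) ≤ 2 * singVal J (r + 1)} :=
    measurableSet_le (measurable_specNorm fun i j => (hB i j).const_sub _) measurable_const
  have hadd := ENNReal.add_lt_add (hsucc 0) (hsucc J)
  rw [ENNReal.inv_two_add_inv_two, ← measure_univ (μ := μ)] at hadd
  obtain ⟨ω, hω₀, hω₁⟩ :=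
    nonempty_inter_of_measure_lt_add μ hJ (Set.subset_univ _) (Set.subset_univ _) hadd
  have h₀ : 0 = B ω := eq_of_specNorm_sub_le_mul_singVal (by simp) hω₀
  have h₁ : J = B ω := eq_of_specNorm_sub_le_mul_singVal ((rank_vecMulVec_le _ _).trans hr) hω₁
  have h := congrFun₂ (h₁.trans h₀.symm) ⟨0, hn⟩ ⟨0, hn⟩
  simp [J] at h

end Randomized

end FewRounds

lemma one_le_log_log {n : ℕ} (hn : 200 ≤ n) : 1 ≤ Real.log (Real.log n) := by
  have hexp : Real.exp 1 ≤ 3 := by linarith [Real.exp_one_lt_d9]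
  have hlog : Real.exp 1 ≤ Real.log n := by
    rw [Real.le_log_iff_exp_le (by positivity)]
    calc Real.exp (Real.exp 1) ≤ Real.exp (3 * 1) := by gcongr; linarith
      _ = Real.exp 1 ^ 3 := Real.exp_nat_mul 1 3
      _ ≤ 3 ^ 3 := by gcongr
      _ ≤ n := by exact_mod_cast (by omega : 27 ≤ n)
  rwa [Real.le_log_iff_exp_le ((Real.exp_pos 1).trans_le hlog)]

theorem spectral_LRA_round_lower_bound_general :
    ∃ (c : ℝ) (n₀ : ℕ), 0 < c ∧
      ∀ (n r k t : ℕ), n₀ ≤ n → 1 ≤ r → n ≤ k →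
      ∀ (Ω : Type*) [MeasurableSpace Ω] (μ : Measure Ω) [IsProbabilityMeasure μ]
        (Qf : Ω → QueryMaps (n * n) k t)
        (out : Ω → (Fin t → Fin k → ℝ) → Matrix (Fin n) (Fin n) ℝ),
        (∀ ω, (Qf ω).Valid) →
        (∀ (j : Fin t) (i : Fin k) (l : Fin (n * n)),
            Measurable fun p : Ω × (Fin (j : ℕ) → Fin k → ℝ) => Qf p.1 j p.2 i l) →
        (∀ i j : Fin n,
            Measurable fun p : Ω × (Fin t → Fin k → ℝ) => out p.1 p.2 i j) →
        (∀ A : Matrix (Fin n) (Fin n) ℝ, 2⁻¹ < μ {ω |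
            specNorm (A - out ω (QueryMaps.resp (Qf ω) (_root_.vec n A)))
              ≤ 2 * singVal A (r + 1)}) →
        c * Real.log ((n : ℝ) ^ 2 / k) ≤ (t : ℝ) := by
  have hL : 0 < Real.log 232 + Real.log 82945 :=
    add_pos (Real.log_pos (by norm_num)) (Real.log_pos (by norm_num))
  refine ⟨(Real.log 232 + Real.log 82945)⁻¹, 200, inv_pos.2 hL, ?_⟩
  intro n r k t hn hr hk Ω _ μ _ Qf out hQ hQm hout hsucc
  have : (0 : ℝ) < n := Nat.cast_pos.2 (by omega)
  have hk' : (0 : ℝ) < k := Nat.cast_pos.2 (by omega)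
  have ht : (1 : ℝ) ≤ t := by
    refine Nat.one_le_cast.2 (Nat.one_le_iff_ne_zero.2 ?_)
    rintro rfl
    refine not_forall_half_lt_measure_specNorm_sub_le (μ := μ) (B := fun ω => out ω 0)
      (fun i j => (hout i j).comp measurable_prodMk_right) (by omega) hr fun A => ?_
    simpa only [Subsingleton.elim (QueryMaps.resp _ _) 0] using hsucc A
  rw [inv_mul_le_iff₀ hL]
  calc Real.log ((n : ℝ) ^ 2 / k) ≤ Real.log (232 * 82945 ^ t) := by
        refine Real.log_le_log (by positivity) ((div_le_iff₀ hk').2 ?_)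
        exact (sq_lt_of_half_lt_measure_specNorm_sub_le hQ hQm hout hsucc hn hr hk).le
    _ = Real.log 232 + t * Real.log 82945 := by
        rw [Real.log_mul (by norm_num) (by positivity), Real.log_pow]
    _ ≤ (Real.log 232 + Real.log 82945) * t := by
        nlinarith [Real.log_pos (by norm_num : (1 : ℝ) < 232)]

/-- Round lower bound for 2-approximate spectral norm low-rank approximation
with constant success probability. -/
theorem spectral_LRA_round_lower_bound :
    ∃ (c : ℝ) (n₀ : ℕ), 0 < c ∧
      ∀ (n r k t : ℕ), n₀ ≤ n → 1 ≤ r → n * r ≤ k → k ≤ n ^ 2 →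
      ∀ (Ω : Type) [MeasurableSpace Ω] (μ : Measure Ω) [IsProbabilityMeasure μ]
        (Qf : Ω → QueryMaps (n * n) k t)
        (out : Ω → (Fin t → Fin k → ℝ) → Matrix (Fin n) (Fin n) ℝ),
        (∀ ω, (Qf ω).Valid) →
        (∀ (j : Fin t) (i : Fin k) (l : Fin (n * n)),
            Measurable fun p : Ω × (Fin (j : ℕ) → Fin k → ℝ) => Qf p.1 j p.2 i l) →
        (∀ i j : Fin n,
            Measurable fun p : Ω × (Fin t → Fin k → ℝ) => out p.1 p.2 i j) →
        (∀ A : Matrix (Fin n) (Fin n) ℝ,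
            (99 / 100 : ℝ≥0∞) ≤
              μ {ω | (out ω (QueryMaps.resp (Qf ω) (vec n A))).rank ≤ r ∧
                    specNorm (A - out ω (QueryMaps.resp (Qf ω) (vec n A)))
                      ≤ 2 * singVal A (r + 1)}) →
        c * (Real.log ((n : ℝ) ^ 2 / k) / Real.log (Real.log n)) ≤ (t : ℝ) := by
  obtain ⟨c, n₀, hc, hround⟩ := spectral_LRA_round_lower_bound_general
  refine ⟨c, max n₀ 200, hc, fun n r k t hn hr hnr hkn Ω _ μ _ Qf out hQ hQm hout hsucc => ?_⟩
  have hk : n ≤ k := (Nat.le_mul_of_pos_right n hr).trans hnr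
  have hk' : (0 : ℝ) < k := Nat.cast_pos.2 (by omega)
  have hlog : 0 ≤ Real.log ((n : ℝ) ^ 2 / k) :=
    Real.log_nonneg ((one_le_div hk').2 (by exact_mod_cast hkn))
  have hhalf : (2⁻¹ : ℝ≥0∞) < 99 / 100 := by
    rw [← ENNReal.toReal_lt_toReal (by finiteness) (by finiteness)]
    norm_num
  calc c * (Real.log ((n : ℝ) ^ 2 / k) / Real.log (Real.log n))
      ≤ c * Real.log ((n : ℝ) ^ 2 / k) := by
        gcongr
        exact div_le_self hlog (one_le_log_log (by omega))
    _ ≤ t := hround n r k t (by omega) hr hk Ω μ Qf out hQ hQm hout fun A =>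
        hhalf.trans_le ((hsucc A).trans (measure_mono fun _ => And.right))

end
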